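/- Assume Hypothesis (A) holds and let (Y^0, μ^0) ∈ χ be given, with μ^0 supported in B(0,R). Let (μ^0_N)_{N∈ℕ} be a sequence of atomic probability measures μ^0_N = (1/N)Σ_{i=1}^N δ_{X^0_i}, all supported in B(0,R), with lim_{N→∞} W₁(μ^0_N, μ^0) = 0. Let (u_N)_{N∈ℕ} ⊂ L^∞([0,T], 𝒰) be a sequence of controls converging to u* in L^∞([0,T], 𝒰), with 𝒰 a nonempty compact subset of ℝ^{md}. For each N, let ζ_N(t) = (Y_N(t), μ_N(t)) (where μ_N(t) = (1/N)Σ_i δ_{X_{i,N}(t)}) be the unique solution of the finite-dimensional system Ẏ_k = u_{k,N}, Ẋ_i = (H*μ_N)(X_i) + Σ_{ℓ=1}^d (G^ℓ*μ_{mℓ,N})(X_i) with initial datum (Y^0, X^0_N) and control u_N. Then the sequence (Y_N, μ_N) converges in C^0([0,T], χ) to some (Y*, μ*) which is a solution, in the sense of the Definition of solution, of the coupled system Ẏ_k = u*_k, ∂_t μ + ∇·[(H*μ + Σ_ℓ G^ℓ*μ_{mℓ})μ] = 0 with initial datum (Y^0, μ^0) and control u*. -/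

import Mathlib

open MeasureTheory Set Metric
open scoped BigOperators ENNReal NNReal RealInnerProductSpace

noncomputable section

/-- The set of couplings of two measures: probability measures on the product with the
prescribed marginals. -/
def couplings {E : Type*} [MeasurableSpace E]
    (μ ν : Measure E) : Set (Measure (E × E)) :=
  {π | IsProbabilityMeasure π ∧ π.map Prod.fst = μ ∧ π.map Prod.snd = ν}

/-- The 1-Wasserstein distance `W₁(μ,ν) = inf_{π ∈ Π(μ,ν)} ∫ |x−y| dπ(x,y)`. -/
def W1 {E : Type*} [MeasurableSpace E] [PseudoMetricSpace E]
    (μ ν : Measure E) : ℝ :=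
  sInf ((fun π : Measure (E × E) => ∫ p, dist p.1 p.2 ∂π) '' couplings μ ν)

/-- The topological support of a measure. -/
def msupport {E : Type*} [MeasurableSpace E] [TopologicalSpace E]
    (μ : Measure E) : Set E :=
  {x | ∀ U ∈ nhds x, μ U ≠ 0}

/-- The distance on `χ = ℝ^{dm} × 𝒫₁(ℝ^d)`:
`‖(Y,μ) − (Y',μ')‖_χ = (1/m) ∑_k |Y_k − Y'_k| + W₁(μ,μ')`. -/
def chiDist {d m : ℕ}
    (Y Y' : Fin m → EuclideanSpace ℝ (Fin d))
    (μ μ' : Measure (EuclideanSpace ℝ (Fin d))) : ℝ :=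
  (m : ℝ)⁻¹ * ∑ k : Fin m, ‖Y k - Y' k‖ + W1 μ μ'

/-- The empirical measure `(1/N) ∑_i δ_{X_i}`. -/
def empMeas {d N : ℕ} (X : Fin N → EuclideanSpace ℝ (Fin d)) :
    Measure (EuclideanSpace ℝ (Fin d)) :=
  (N : ℝ≥0∞)⁻¹ • ∑ i : Fin N, Measure.dirac (X i)

/-- The mean-field vector field `x ↦ (H*μ)(x) + ∑_ℓ (G^ℓ*μ_{mℓ})(x)`,
where `μ_{mℓ} = (1/m) ∑_k u_{kℓ} δ_{Y_k}`. -/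
def mfField {d m : ℕ}
    (H : EuclideanSpace ℝ (Fin d) → EuclideanSpace ℝ (Fin d))
    (G : Fin d → EuclideanSpace ℝ (Fin d) → EuclideanSpace ℝ (Fin d))
    (μ : Measure (EuclideanSpace ℝ (Fin d)))
    (u Y : Fin m → EuclideanSpace ℝ (Fin d))
    (x : EuclideanSpace ℝ (Fin d)) : EuclideanSpace ℝ (Fin d) :=
  (∫ ξ, H (x - ξ) ∂μ) + ∑ ℓ : Fin d, (m : ℝ)⁻¹ • ∑ k : Fin m, (u k ℓ) • G ℓ (x - Y k)

/-- Solution of the coupled leader/mean-field system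
`Ẏ_k = u_k`, `∂_t μ + ∇·[(H*μ + ∑_ℓ G^ℓ*μ_{mℓ}) μ] = 0` on `[0,T]`, in the sense of the
Definition of solution: `μ(t)` are probability measures, equi-compactly supported;
`(Y,μ)` is continuous w.r.t. the `χ`-metric; `Y` is a Carathéodory solution of
`Ẏ_k = u_k`; and the continuity equation holds in weak form against `C_c^∞` test
functions. -/
def IsMFSol {d m : ℕ} (T : ℝ)
    (H : EuclideanSpace ℝ (Fin d) → EuclideanSpace ℝ (Fin d))
    (G : Fin d → EuclideanSpace ℝ (Fin d) → EuclideanSpace ℝ (Fin d))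
    (u : ℝ → Fin m → EuclideanSpace ℝ (Fin d))
    (Y : ℝ → Fin m → EuclideanSpace ℝ (Fin d))
    (μ : ℝ → Measure (EuclideanSpace ℝ (Fin d))) : Prop :=
  (∀ t ∈ Icc (0:ℝ) T, IsProbabilityMeasure (μ t)) ∧
  (∃ R > 0, ∀ t ∈ Icc (0:ℝ) T,
      msupport (μ t) ⊆ closedBall (0 : EuclideanSpace ℝ (Fin d)) R) ∧
  (∀ t ∈ Icc (0:ℝ) T, ∀ ε > 0, ∃ δ > 0, ∀ s ∈ Icc (0:ℝ) T,
      |s - t| < δ → chiDist (Y s) (Y t) (μ s) (μ t) < ε) ∧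
  (∀ k, ∀ t ∈ Icc (0:ℝ) T, Y t k = Y 0 k + ∫ s in (0:ℝ)..t, u s k) ∧
  (∀ φ : EuclideanSpace ℝ (Fin d) → ℝ, ContDiff ℝ (⊤ : ℕ∞) φ → HasCompactSupport φ →
      ∀ t ∈ Icc (0:ℝ) T,
        ∫ x, φ x ∂(μ t) = (∫ x, φ x ∂(μ 0)) +
          ∫ s in (0:ℝ)..t,
            ∫ x, ⟪gradient φ x, mfField H G (μ s) (u s) (Y s) x⟫ ∂(μ s))

/-- Hypothesis (A): `H` and the `G^ℓ` are locally Lipschitz with sub-linear growth, the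
convolution with `H` is Lipschitz in the measure argument w.r.t. `W₁` (uniformly on balls,
for compactly supported probability measures), and the convolution with `G^ℓ` against
weighted empirical measures with common weights bounded by `M` is Lipschitz in the atoms. -/
def HypA {d : ℕ} (m : ℕ)
    (H : EuclideanSpace ℝ (Fin d) → EuclideanSpace ℝ (Fin d))
    (G : Fin d → EuclideanSpace ℝ (Fin d) → EuclideanSpace ℝ (Fin d)) : Prop :=
  LocallyLipschitz H ∧ (∀ ℓ, LocallyLipschitz (G ℓ)) ∧
  (∃ C ≥ 0, (∀ x, ‖H x‖ ≤ C * (1 + ‖x‖)) ∧ ∀ ℓ x, ‖G ℓ x‖ ≤ C * (1 + ‖x‖)) ∧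
  (∀ ρ > 0, ∀ R > 0, ∃ L ≥ 0,
    ∀ μ ν : Measure (EuclideanSpace ℝ (Fin d)),
      IsProbabilityMeasure μ → IsProbabilityMeasure ν →
      msupport μ ⊆ closedBall (0 : EuclideanSpace ℝ (Fin d)) R →
      msupport ν ⊆ closedBall (0 : EuclideanSpace ℝ (Fin d)) R →
      ∀ y ∈ closedBall (0 : EuclideanSpace ℝ (Fin d)) ρ,
        ‖(∫ ξ, H (y - ξ) ∂μ) - ∫ ξ, H (y - ξ) ∂ν‖ ≤ L * W1 μ ν) ∧
  (∀ ρ > 0, ∀ M ≥ 0, ∃ L ≥ 0, ∀ ℓ : Fin d, ∀ w : Fin m → ℝ, (∀ k, |w k| ≤ M) →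
    ∀ Y Y' : Fin m → EuclideanSpace ℝ (Fin d),
      ∀ y ∈ closedBall (0 : EuclideanSpace ℝ (Fin d)) ρ,
        ‖(m : ℝ)⁻¹ • ∑ k : Fin m, w k • (G ℓ (y - Y k) - G ℓ (y - Y' k))‖
          ≤ L * ((m : ℝ)⁻¹ * ∑ k : Fin m, ‖Y k - Y' k‖))

/-- Right-hand side of the followers' equation in the `N`-agent system (written through
the empirical measures): `(H*μ_N)(X_i) + ∑_ℓ (G^ℓ*μ_{mℓ})(X_i)`. -/
def finRHS {d N m : ℕ}
    (H : EuclideanSpace ℝ (Fin d) → EuclideanSpace ℝ (Fin d))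
    (G : Fin d → EuclideanSpace ℝ (Fin d) → EuclideanSpace ℝ (Fin d))
    (u : Fin m → EuclideanSpace ℝ (Fin d))
    (Y : Fin m → EuclideanSpace ℝ (Fin d))
    (X : Fin N → EuclideanSpace ℝ (Fin d)) (i : Fin N) :
    EuclideanSpace ℝ (Fin d) :=
  (N : ℝ)⁻¹ • ∑ j : Fin N, H (X i - X j)
    + ∑ ℓ : Fin d, (m : ℝ)⁻¹ • ∑ k : Fin m, (u k ℓ) • G ℓ (X i - Y k)

/-- **Grönwall's inequality**, integral form. -/
theorem le_mul_exp_of_le_add_integral {f : ℝ → ℝ} {A b T : ℝ} (hb : 0 ≤ b)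
    (hf : ContinuousOn f (Icc 0 T))
    (h : ∀ t ∈ Icc 0 T, f t ≤ A + ∫ s in (0:ℝ)..t, b * f s) :
    ∀ t ∈ Icc 0 T, f t ≤ A * Real.exp (b * t) := by
  intro t ht
  have hT : 0 ≤ T := ht.1.trans ht.2
  set F : ℝ → ℝ := IccExtend hT ((Icc 0 T).domRestrict f) with hF
  have hFc : Continuous F := (continuousOn_iff_continuous_domRestrict.1 hf).Icc_extend'
  have hFf : ∀ s ∈ Icc 0 T, F s = f s := fun s hs => by
    simp [hF, IccExtend_of_mem hT _ hs, domRestrict]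
  set g : ℝ → ℝ := fun s => A + ∫ r in (0:ℝ)..s, b * F r with hg
  have hgd : ∀ s, HasDerivAt g (b * F s) s := fun s => by
    have : Continuous fun r => b * F r := by fun_prop
    exact (intervalIntegral.integral_hasDerivAt_right (this.intervalIntegrable _ _)
      (this.stronglyMeasurableAtFilter _ _) this.continuousAt).const_add A
  have hfg : ∀ s ∈ Icc 0 T, f s ≤ g s := fun s hs => by
    refine (h s hs).trans_eq ?_
    simp only [hg]
    congr 1
    refine intervalIntegral.integral_congr fun r hr => ?_
    rw [uIcc_of_le hs.1] at hr
    simp only [hFf r ⟨hr.1, hr.2.trans hs.2⟩]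
  have key := le_gronwallBound_of_liminf_deriv_right_le (f := g) (f' := fun s => b * F s)
    (δ := A) (K := b) (ε := 0) (a := 0) (b := T)
    (fun s _ => (hgd s).continuousAt.continuousWithinAt)
    (fun s _ r hr => (hgd s).hasDerivWithinAt.liminf_right_slope_le hr)
    (by simp [hg])
    (fun s hs => by
      have hs' : s ∈ Icc 0 T := ⟨hs.1, hs.2.le⟩
      rw [hFf s hs', add_zero]
      exact mul_le_mul_of_nonneg_left (hfg s hs') hb) t ht
  rw [gronwallBound_ε0, sub_zero] at key
  exact (hfg t ht).trans key

theorem integral_comp_fintype {Ω ι : Type*} [MeasurableSpace Ω] [Fintype ι]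
    [MeasurableSpace ι] [MeasurableSingletonClass ι] (P : Measure Ω) [IsProbabilityMeasure P]
    {ξ : Ω → ι} (hξ : Measurable ξ) (h : ι → ℝ) :
    ∫ ω, h (ξ ω) ∂P = ∑ i, (P.map ξ).real {i} * h i := by
  have : IsProbabilityMeasure (P.map ξ) := Measure.isProbabilityMeasure_map hξ.aemeasurable
  have hh : Measurable h := measurable_of_countable h
  rw [← integral_map hξ.aemeasurable (f := h) hh.aestronglyMeasurable, integral_fintype]
  · simp
  · exact Integrable.of_finite

/-- A finitely valued random index may be averaged before or after integrating in time. -/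
theorem integral_intervalIntegral_swap_of_fintype {Ω ι : Type*} [MeasurableSpace Ω] [Fintype ι]
    [MeasurableSpace ι] [MeasurableSingletonClass ι] (P : Measure Ω) [IsProbabilityMeasure P]
    {ξ : Ω → ι} (hξ : Measurable ξ) {g : ι → ℝ → ℝ} {t : ℝ}
    (hg : ∀ i, IntervalIntegrable (g i) volume 0 t) :
    IntervalIntegrable (fun s => ∫ ω, g (ξ ω) s ∂P) volume 0 t ∧
    ∫ ω, (∫ s in (0:ℝ)..t, g (ξ ω) s) ∂P = ∫ s in (0:ℝ)..t, ∫ ω, g (ξ ω) s ∂P := by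
  simp_rw [fun s => integral_comp_fintype P hξ fun i => g i s]
  rw [integral_comp_fintype P hξ fun i => ∫ s in (0:ℝ)..t, g i s]
  refine ⟨?_, ?_⟩
  · have := IntervalIntegrable.sum Finset.univ (f := fun i s => (P.map ξ).real {i} * g i s)
      (fun i _ => (hg i).const_mul ((P.map ξ).real {i}))
    simpa only [Finset.sum_fn] using this
  · rw [intervalIntegral.integral_finsetSum fun i _ => (hg i).const_mul _]
    simp

/-- Chain rule in integral form for a smooth function along a Lipschitz curve given as a
primitive. -/
theorem comp_eq_add_integral_gradient {d : ℕ} {φ : EuclideanSpace ℝ (Fin d) → ℝ}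
    (hφ : ContDiff ℝ (⊤ : ℕ∞) φ) (hφc : HasCompactSupport φ)
    {X g : ℝ → EuclideanSpace ℝ (Fin d)} {t V : ℝ} (ht : 0 ≤ t)
    (hg : IntervalIntegrable g volume 0 t) (hV : ∀ s ∈ Icc 0 t, ‖g s‖ ≤ V)
    (hX : ∀ s ∈ Icc 0 t, X s = X 0 + ∫ r in (0:ℝ)..s, g r) :
    φ (X t) = φ (X 0) + ∫ s in (0:ℝ)..t, ⟪gradient φ (X s), g s⟫ := by
  obtain ⟨C, hC⟩ := hφ.lipschitzWith_of_hasCompactSupport hφc (by simp)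
  set W : ℝ → EuclideanSpace ℝ (Fin d) := fun s => X 0 + ∫ r in (0:ℝ)..s, g r with hW
  have hV0 : 0 ≤ V := (norm_nonneg _).trans (hV 0 ⟨le_rfl, ht⟩)
  have hWL : LipschitzOnWith ⟨V, hV0⟩ W (uIcc 0 t) := by
    rw [uIcc_of_le ht]
    refine LipschitzOnWith.of_dist_le_mul fun a ha b hb => ?_
    have hi : ∀ c ∈ Icc 0 t, IntervalIntegrable g volume 0 c := fun c hc =>
      hg.mono_set (by rw [uIcc_of_le hc.1, uIcc_of_le ht]; exact Icc_subset_Icc_right hc.2)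
    rw [dist_eq_norm]
    simp only [hW, add_sub_add_left_eq_sub]
    rw [intervalIntegral.integral_interval_sub_left (hi a ha) (hi b hb)]
    refine intervalIntegral.norm_integral_le_of_norm_le_const fun s hs => hV s ?_
    rcases le_total a b with hab | hab
    · rw [uIoc_of_ge hab] at hs; exact ⟨ha.1.trans hs.1.le, hs.2.trans hb.2⟩
    · rw [uIoc_of_le hab] at hs; exact ⟨hb.1.trans hs.1.le, hs.2.trans ha.2⟩
  have hAC := (hC.comp_lipschitzOnWith hWL).absolutelyContinuousOnInterval
  have hI := hAC.integral_deriv_eq_sub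
  have hWX : ∀ s ∈ Icc 0 t, W s = X s := fun s hs => (hX s hs).symm
  rw [← hWX t ⟨ht, le_rfl⟩, ← hWX 0 ⟨le_rfl, ht⟩]
  have : ∫ s in (0:ℝ)..t, ⟪gradient φ (X s), g s⟫ = ∫ s in (0:ℝ)..t, deriv (φ ∘ W) s := by
    refine intervalIntegral.integral_congr_ae ?_
    filter_upwards [hg.ae_hasDerivAt_integral] with s hs hst
    have hst' : s ∈ uIcc 0 t := uIoc_subset_uIcc hst
    have hd : HasDerivAt W (g s) s := (hs hst' 0 left_mem_uIcc).const_add _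
    have hf := (hφ.differentiable (by simp) (W s)).hasGradientAt.hasFDerivAt
    rw [(hf.comp_hasDerivAt s hd).deriv, ← hWX s (by rwa [uIcc_of_le ht] at hst')]
    simp
  rw [this, hI]
  simp

/-- Completeness of `L¹`, for uniformly bounded sequences of functions. -/
theorem exists_limit_of_cauchy_integral {Ω E : Type*} [MeasurableSpace Ω] {P : Measure Ω}
    [NormedAddCommGroup E] [CompleteSpace E] [MeasurableSpace E] [BorelSpace E]
    [SecondCountableTopology E]
    {Z : ℕ → Ω → E} {r : ℝ} (hr : 0 ≤ r) (hb : ∀ n ω, ‖Z n ω‖ ≤ r) (hZ : ∀ n, Integrable (Z n) P)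
    (hC : ∀ ε > 0, ∃ n₀, ∀ n ≥ n₀, ∀ k ≥ n₀, ∫ ω, ‖Z n ω - Z k ω‖ ∂P ≤ ε) :
    ∃ Z' : Ω → E, Measurable Z' ∧ (∀ ω, ‖Z' ω‖ ≤ r) ∧
      Filter.Tendsto (fun n => ∫ ω, ‖Z n ω - Z' ω‖ ∂P) Filter.atTop (nhds 0) := by
  have hd : ∀ f g : Ω → E, ∀ (hf : Integrable f P) (hg : Integrable g P),
      dist (hf.toL1 f) (hg.toL1 g) = ∫ ω, ‖f ω - g ω‖ ∂P := fun f g hf hg => by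
    rw [dist_eq_norm, ← Integrable.toL1_sub, L1.norm_eq_integral_norm]
    refine integral_congr_ae ?_
    filter_upwards [(hf.sub hg).coeFn_toL1] with ω hω
    rw [hω]; rfl
  have hcs : CauchySeq fun n => (hZ n).toL1 (Z n) := by
    rw [Metric.cauchySeq_iff]
    intro ε hε
    obtain ⟨n₀, hn₀⟩ := hC (ε / 2) (half_pos hε)
    refine ⟨n₀, fun n hn k hk => ?_⟩
    rw [hd]
    exact (hn₀ n hn k hk).trans_lt (half_lt_self hε)
  obtain ⟨z, hz⟩ := cauchySeq_tendsto_of_complete hcs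
  have hzi := L1.integrable_coeFn z
  set Z' : Ω → E := hzi.1.mk z
  have hZ'm : Measurable Z' := hzi.1.stronglyMeasurable_mk.measurable
  have hZ'e : (z : Ω → E) =ᵐ[P] Z' := hzi.1.ae_eq_mk
  have hZ'i : Integrable Z' P := hzi.congr hZ'e
  have hzz : z = hZ'i.toL1 Z' := by
    rw [← Integrable.toL1_coeFn z hzi]
    exact (Integrable.toL1_eq_toL1_iff _ _ _ _).2 hZ'e
  rw [tendsto_iff_dist_tendsto_zero] at hz
  have hlim : Filter.Tendsto (fun n => ∫ ω, ‖Z n ω - Z' ω‖ ∂P) Filter.atTop (nhds 0) := by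
    refine hz.congr fun n => ?_
    rw [hzz, hd]
  have hae : ∀ᵐ ω ∂P, ‖Z' ω‖ ≤ r := by
    have hpi : Integrable (fun ω => max (‖Z' ω‖ - r) 0) P :=
      hZ'i.norm.mono' (by fun_prop) (Filter.Eventually.of_forall fun ω => by
        rw [Real.norm_of_nonneg (le_max_right _ _)]
        exact max_le (sub_le_self _ hr) (norm_nonneg _))
    have h0 : ∫ ω, max (‖Z' ω‖ - r) 0 ∂P = 0 := by
      refine le_antisymm (ge_of_tendsto' hlim fun n => ?_) (integral_nonneg fun ω => le_max_right _ _)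
      refine integral_mono hpi ((hZ n).sub hZ'i).norm fun ω => max_le ?_ (norm_nonneg _)
      have h1 := norm_sub_norm_le (Z' ω) (Z n ω)
      rw [norm_sub_rev] at h1
      linarith [hb n ω]
    replace h0 := (integral_eq_zero_iff_of_nonneg
      (f := fun ω => max (‖Z' ω‖ - r) 0) (fun ω => le_max_right _ _) hpi).1 h0
    filter_upwards [h0] with ω hω
    have := le_max_left (‖Z' ω‖ - r) 0
    rw [show max (‖Z' ω‖ - r) 0 = 0 from hω] at this
    linarith
  have hset : MeasurableSet {ω | ‖Z' ω‖ ≤ r} := measurableSet_le (by fun_prop) measurable_const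
  refine ⟨{ω | ‖Z' ω‖ ≤ r}.indicator Z', hZ'm.indicator hset, fun ω => ?_, ?_⟩
  · by_cases h : ‖Z' ω‖ ≤ r
    · rwa [indicator_of_mem (by exact h)]
    · rw [indicator_of_notMem (by exact h), norm_zero]; exact hr
  · refine hlim.congr fun n => integral_congr_ae ?_
    filter_upwards [hae] with ω hω
    rw [indicator_of_mem (by exact hω)]

theorem exists_gluing {α β γ : Type*} [MeasurableSpace α] [MeasurableSpace β] [MeasurableSpace γ]
    [StandardBorelSpace γ] [Nonempty γ] (π : Measure (α × β)) [IsProbabilityMeasure π]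
    (τ : Measure (β × γ)) [IsProbabilityMeasure τ] (h : π.map Prod.snd = τ.map Prod.fst) :
    ∃ σ : Measure ((α × β) × γ), IsProbabilityMeasure σ ∧ σ.map Prod.fst = π ∧
      σ.map (fun p => (p.1.2, p.2)) = τ := by
  refine ⟨π.compProd (τ.condKernel.comap Prod.snd measurable_snd), inferInstance, ?_, ?_⟩
  · exact Measure.fst_compProd _ _
  · have hm : Measurable fun p : (α × β) × γ => (p.1.2, p.2) := by fun_prop
    refine Measure.ext_of_lintegral _ fun f hf => ?_
    rw [lintegral_map hf hm, 
      Measure.lintegral_compProd (f := fun p : (α × β) × γ => f (p.1.2, p.2)) (hf.comp hm)]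
    conv_rhs => rw [← τ.disintegrate τ.condKernel, Measure.lintegral_compProd hf, Measure.fst, ← h,
      lintegral_map (hf.lintegral_kernel_prod_right') measurable_snd]
    simp

theorem exists_randomization {α γ : Type*} [MeasurableSpace α] [MeasurableSpace γ]
    [StandardBorelSpace γ] [Nonempty γ] (ρ : Measure (α × γ)) [IsProbabilityMeasure ρ] :
    ∃ ξ : α × unitInterval → γ, Measurable ξ ∧
      ((ρ.map Prod.fst).prod volume).map (fun ω => (ω.1, ξ ω)) = ρ := by
  obtain ⟨f, hf, hfκ⟩ := ρ.condKernel.exists_measurable_map_eq_unitInterval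
  have hm : Measurable fun ω : α × unitInterval => (ω.1, Function.uncurry f ω) := by fun_prop
  refine ⟨Function.uncurry f, hf, Measure.ext_of_lintegral _ fun g hg => ?_⟩
  have : IsProbabilityMeasure (ρ.map Prod.fst) :=
    Measure.isProbabilityMeasure_map measurable_fst.aemeasurable
  rw [lintegral_map hg hm, lintegral_prod (fun ω => g (ω.1, Function.uncurry f ω)) (hg.comp hm).aemeasurable]
  conv_rhs => rw [← ρ.disintegrate ρ.condKernel, Measure.lintegral_compProd hg, Measure.fst]
  refine lintegral_congr fun a => ?_
  rw [← hfκ a, lintegral_map (by fun_prop) hf.of_uncurry_left]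
  rfl

theorem isProbabilityMeasure_empMeas {d n : ℕ} (X : Fin (n + 1) → EuclideanSpace ℝ (Fin d)) :
    IsProbabilityMeasure (empMeas X) := by
  constructor
  simp only [empMeas, Measure.smul_apply, Measure.finsetSum_apply, measure_univ, smul_eq_mul]
  simp only [Finset.sum_const, Finset.card_univ, Fintype.card_fin, nsmul_eq_mul, mul_one]
  exact ENNReal.inv_mul_cancel (by simp) (by simp)

/-- A random index whose law is uniform, and such that `X₀ ∘ ξ` is almost optimally coupled to a
variable with law `μ₀`. -/
theorem exists_random_index {d n : ℕ} (X₀ : Fin (n + 1) → EuclideanSpace ℝ (Fin d))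
    (μ₀ : Measure (EuclideanSpace ℝ (Fin d))) [IsProbabilityMeasure μ₀] {ε : ℝ} (hε : 0 < ε) :
    ∃ ξ : EuclideanSpace ℝ (Fin d) × unitInterval → Fin (n + 1), Measurable ξ ∧
      (∀ X : Fin (n + 1) → EuclideanSpace ℝ (Fin d),
        (μ₀.prod volume).map (fun ω => X (ξ ω)) = empMeas X) ∧
      ∫ ω, ‖X₀ (ξ ω) - ω.1‖ ∂(μ₀.prod volume) < W1 (empMeas X₀) μ₀ + ε := by
  have hemp := isProbabilityMeasure_empMeas X₀
  have hne : (couplings (empMeas X₀) μ₀).Nonempty :=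
    ⟨(empMeas X₀).prod μ₀, inferInstance, by simp, by simp⟩
  obtain ⟨_, ⟨π, ⟨hπ, hπ1, hπ2⟩, rfl⟩, hlt⟩ := Real.lt_sInf_add_pos
    (hne.image fun π : Measure (EuclideanSpace ℝ (Fin d) × EuclideanSpace ℝ (Fin d)) =>
      ∫ p, dist p.1 p.2 ∂π) hε
  set υ : Measure (Fin (n + 1)) := ((n + 1 : ℕ) : ℝ≥0∞)⁻¹ • ∑ i, Measure.dirac i with hυ
  have hυmap : ∀ {β : Type} [MeasurableSpace β] (f : Fin (n + 1) → β),
      υ.map f = ((n + 1 : ℕ) : ℝ≥0∞)⁻¹ • ∑ i, Measure.dirac (f i) := fun f => by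
    have hf : Measurable f := measurable_of_countable f
    ext s hs
    simp [hυ, Measure.map_apply hf hs, Measure.dirac_apply' _ hs, Measure.dirac_apply' _ (hf hs),
      indicator]
    rfl
  have hgm : Measurable fun i => (X₀ i, i) := measurable_of_countable _
  have hX₀m : Measurable X₀ := measurable_of_countable _
  have hυ1 : IsProbabilityMeasure υ := by
    have : IsProbabilityMeasure (υ.map X₀) := by rw [hυmap]; exact hemp
    exact ⟨by simpa [Measure.map_apply hX₀m] using this.measure_univ⟩
  set τ := υ.map fun i => (X₀ i, i) with hτ
  have : IsProbabilityMeasure τ := Measure.isProbabilityMeasure_map hgm.aemeasurable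
  have hswap : IsProbabilityMeasure (π.map Prod.swap) :=
    Measure.isProbabilityMeasure_map measurable_swap.aemeasurable
  obtain ⟨σ, hσ, hσ1, hσ2⟩ := exists_gluing (π.map Prod.swap) τ (by
    rw [Measure.map_map measurable_snd measurable_swap, hτ, Measure.map_map measurable_fst hgm]
    exact hπ1.trans (hυmap X₀).symm)
  have hrm : Measurable fun p : (EuclideanSpace ℝ (Fin d) × EuclideanSpace ℝ (Fin d)) ×
      Fin (n + 1) => (p.1.1, p.2) := by fun_prop
  have hrm' : Measurable fun p : (EuclideanSpace ℝ (Fin d) × EuclideanSpace ℝ (Fin d)) ×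
      Fin (n + 1) => (p.1.2, p.2) := by fun_prop
  set ρ := σ.map fun p => (p.1.1, p.2) with hρ
  have : IsProbabilityMeasure ρ := Measure.isProbabilityMeasure_map hrm.aemeasurable
  obtain ⟨ξ, hξ, hξρ⟩ := exists_randomization ρ
  have hρ1 : ρ.map Prod.fst = μ₀ := by
    rw [hρ, Measure.map_map measurable_fst hrm, ← hπ2]
    calc σ.map (Prod.fst ∘ fun p => (p.1.1, p.2)) = (σ.map Prod.fst).map Prod.fst :=
          (Measure.map_map measurable_fst measurable_fst).symm
      _ = π.map Prod.snd := by
          rw [hσ1, Measure.map_map measurable_fst measurable_swap]; rfl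
  have hρ2 : ρ.map Prod.snd = υ := by
    rw [hρ, Measure.map_map measurable_snd hrm]
    calc σ.map (Prod.snd ∘ fun p => (p.1.1, p.2))
        = (σ.map fun p => (p.1.2, p.2)).map Prod.snd :=
          (Measure.map_map measurable_snd hrm').symm
      _ = υ := by
          rw [hσ2, hτ, Measure.map_map measurable_snd hgm]; exact Measure.map_id
  rw [hρ1] at hξρ
  have hm : Measurable fun ω : EuclideanSpace ℝ (Fin d) × unitInterval => (ω.1, ξ ω) := by
    fun_prop
  refine ⟨ξ, hξ, fun X => ?_, ?_⟩
  · have hX : Measurable X := measurable_of_countable X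
    calc (μ₀.prod volume).map (fun ω => X (ξ ω))
        = (((μ₀.prod volume).map fun ω => (ω.1, ξ ω)).map Prod.snd).map X := by
          rw [Measure.map_map measurable_snd hm, Measure.map_map hX (measurable_snd.comp hm)]; rfl
      _ = empMeas X := by rw [hξρ, hρ2, hυmap]; rfl
  · refine lt_of_eq_of_lt ?_ hlt
    have hc : Measurable fun p : EuclideanSpace ℝ (Fin d) × Fin (n + 1) => ‖X₀ p.2 - p.1‖ := by
      fun_prop
    have hae : ∀ᵐ p ∂σ, p.1.2 = X₀ p.2 := by
      have hs : MeasurableSet {q : EuclideanSpace ℝ (Fin d) × Fin (n + 1) | q.1 = X₀ q.2} :=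
        measurableSet_eq_fun measurable_fst (by fun_prop)
      have : ∀ᵐ q ∂(σ.map fun p => (p.1.2, p.2)), q.1 = X₀ q.2 := by
        rw [hσ2, hτ, ae_map_iff hgm.aemeasurable hs]
        exact Filter.Eventually.of_forall fun _ => rfl
      exact ae_of_ae_map (by fun_prop) this
    calc ∫ ω, ‖X₀ (ξ ω) - ω.1‖ ∂(μ₀.prod volume) = ∫ p, ‖X₀ p.2 - p.1‖ ∂ρ := by
          rw [← hξρ, integral_map hm.aemeasurable hc.aestronglyMeasurable]
      _ = ∫ p, ‖X₀ p.2 - p.1.1‖ ∂σ := by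
          rw [hρ, integral_map hrm.aemeasurable hc.aestronglyMeasurable]
      _ = ∫ p, ‖p.1.2 - p.1.1‖ ∂σ := by
          refine integral_congr_ae ?_
          filter_upwards [hae] with p hp
          rw [hp]
      _ = ∫ p, ‖p.2 - p.1‖ ∂(π.map Prod.swap) := by
          rw [← hσ1, integral_map measurable_fst.aemeasurable
            (by fun_prop : Measurable _).aestronglyMeasurable]
      _ = ∫ p, dist p.1 p.2 ∂π := by
          rw [integral_map measurable_swap.aemeasurable
            (by fun_prop : Measurable _).aestronglyMeasurable]
          simp [dist_eq_norm]

/-- The average of the costs along a coupling bounds the Wasserstein distance. -/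
theorem W1_map_le {Ω E : Type*} [MeasurableSpace Ω] {P : Measure Ω} [IsProbabilityMeasure P]
    [NormedAddCommGroup E] [MeasurableSpace E] [BorelSpace E] [SecondCountableTopology E]
    {Z Z' : Ω → E} (hZ : Measurable Z) (hZ' : Measurable Z') :
    W1 (P.map Z) (P.map Z') ≤ ∫ ω, ‖Z ω - Z' ω‖ ∂P := by
  have hm : Measurable fun ω => (Z ω, Z' ω) := hZ.prodMk hZ'
  refine csInf_le ⟨0, ?_⟩ ⟨P.map fun ω => (Z ω, Z' ω),
    ⟨Measure.isProbabilityMeasure_map hm.aemeasurable, ?_, ?_⟩, ?_⟩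
  · rintro _ ⟨π, -, rfl⟩
    exact integral_nonneg fun p => dist_nonneg
  · rw [Measure.map_map measurable_fst hm]; rfl
  · rw [Measure.map_map measurable_snd hm]; rfl
  · have hc : Continuous fun p : E × E => dist p.1 p.2 := by fun_prop
    simp only
    rw [integral_map hm.aemeasurable hc.measurable.aestronglyMeasurable]
    simp only [dist_eq_norm]

theorem LocallyLipschitz.exists_norm_sub_le_of_norm_le {d : ℕ}
    {f : EuclideanSpace ℝ (Fin d) → EuclideanSpace ℝ (Fin d)} (hf : LocallyLipschitz f) (r : ℝ) :
    ∃ K ≥ 0, ∀ x y, ‖x‖ ≤ r → ‖y‖ ≤ r → ‖f x - f y‖ ≤ K * ‖x - y‖ := by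
  obtain ⟨K, hK⟩ := LocallyLipschitzOn.exists_lipschitzOnWith_of_compact
    (isCompact_closedBall (0 : EuclideanSpace ℝ (Fin d)) r) (hf.locallyLipschitzOn)
  refine ⟨K, K.2, fun x y hx hy => ?_⟩
  have := hK.dist_le_mul x (by simpa using hx) y (by simpa using hy)
  simpa [dist_eq_norm] using this

theorem norm_inv_smul_sum_le {E : Type*} [NormedAddCommGroup E] [NormedSpace ℝ E] {m : ℕ}
    {v : Fin m → E} {c : ℝ} (hc : 0 ≤ c) (hv : ∀ k, ‖v k‖ ≤ c) :
    ‖(m : ℝ)⁻¹ • ∑ k, v k‖ ≤ c := by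
  rw [norm_smul, Real.norm_of_nonneg (by positivity)]
  rcases Nat.eq_zero_or_pos m with rfl | hm
  · simpa using hc
  have hm' : (0:ℝ) < m := by exact_mod_cast hm
  rw [inv_mul_le_iff₀ hm']
  refine (norm_sum_le _ _).trans ((Finset.sum_le_sum fun k _ => hv k).trans_eq ?_)
  simp

/-- Stability of the mean-field vector field with respect to all of its arguments. -/
theorem norm_mfField_map_sub_le {d m : ℕ} {Ω : Type*} [MeasurableSpace Ω] {P : Measure Ω}
    [IsProbabilityMeasure P] {H : EuclideanSpace ℝ (Fin d) → EuclideanSpace ℝ (Fin d)}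
    {G : Fin d → EuclideanSpace ℝ (Fin d) → EuclideanSpace ℝ (Fin d)} (hH : Continuous H)
    {r K B M δ δ' : ℝ} (hK : 0 ≤ K) (hB : 0 ≤ B) (hM : 0 ≤ M) (hδ : 0 ≤ δ) (hδ' : 0 ≤ δ')
    (hHK : ∀ x y, ‖x‖ ≤ r + r → ‖y‖ ≤ r + r → ‖H x - H y‖ ≤ K * ‖x - y‖)
    (hGK : ∀ ℓ x y, ‖x‖ ≤ r + r → ‖y‖ ≤ r + r → ‖G ℓ x - G ℓ y‖ ≤ K * ‖x - y‖)
    (hHB : ∀ x, ‖x‖ ≤ r + r → ‖H x‖ ≤ B) (hGB : ∀ ℓ x, ‖x‖ ≤ r + r → ‖G ℓ x‖ ≤ B)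
    {Z Z' : Ω → EuclideanSpace ℝ (Fin d)} (hZ : Measurable Z) (hZ' : Measurable Z')
    (hZr : ∀ ω, ‖Z ω‖ ≤ r) (hZ'r : ∀ ω, ‖Z' ω‖ ≤ r)
    {u u' Y Y' : Fin m → EuclideanSpace ℝ (Fin d)} (hu' : ∀ k, ‖u' k‖ ≤ M)
    (hY : ∀ k, ‖Y k‖ ≤ r) (hY' : ∀ k, ‖Y' k‖ ≤ r)
    (huu' : ∀ k, ‖u k - u' k‖ ≤ δ) (hYY' : ∀ k, ‖Y k - Y' k‖ ≤ δ')
    {x x' : EuclideanSpace ℝ (Fin d)} (hx : ‖x‖ ≤ r) (hx' : ‖x'‖ ≤ r) :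
    ‖mfField H G (P.map Z) u Y x - mfField H G (P.map Z') u' Y' x'‖ ≤
      K * (‖x - x'‖ + ∫ ω, ‖Z ω - Z' ω‖ ∂P) + d * (δ * B + M * (K * (‖x - x'‖ + δ'))) := by
  have hsub : ∀ a b : EuclideanSpace ℝ (Fin d), ‖a‖ ≤ r → ‖b‖ ≤ r → ‖a - b‖ ≤ r + r :=
    fun a b ha hb => (norm_sub_le a b).trans (add_le_add ha hb)
  have hdiff : ∀ a a' b b' : EuclideanSpace ℝ (Fin d),
      ‖(a - b) - (a' - b')‖ ≤ ‖a - a'‖ + ‖b - b'‖ := fun a a' b b' => by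
    rw [sub_sub_sub_comm]; exact norm_sub_le _ _
  have hInt : ∀ (y : EuclideanSpace ℝ (Fin d)) (W : Ω → EuclideanSpace ℝ (Fin d)), ‖y‖ ≤ r →
      Measurable W → (∀ ω, ‖W ω‖ ≤ r) → Integrable (fun ω => H (y - W ω)) P := fun y W hy hW hWr =>
    Integrable.of_bound (hH.measurable.comp (hW.const_sub y)).aestronglyMeasurable B
      (Filter.Eventually.of_forall fun ω => hHB _ (hsub _ _ hy (hWr ω)))
  have hmap : ∀ (y : EuclideanSpace ℝ (Fin d)) (W : Ω → EuclideanSpace ℝ (Fin d)), Measurable W →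
      ∫ ξ, H (y - ξ) ∂(P.map W) = ∫ ω, H (y - W ω) ∂P := fun y W hW =>
    integral_map hW.aemeasurable
      (hH.comp (continuous_const.sub continuous_id)).measurable.aestronglyMeasurable
  have hZZ' : Integrable (fun ω => ‖Z ω - Z' ω‖) P :=
    Integrable.of_bound (by fun_prop) (r + r) (Filter.Eventually.of_forall fun ω => by
      rw [norm_norm]; exact hsub _ _ (hZr ω) (hZ'r ω))
  simp only [mfField]
  rw [add_sub_add_comm]
  refine (norm_add_le _ _).trans (add_le_add ?_ ?_)
  · rw [hmap x Z hZ, hmap x' Z' hZ', ← integral_sub (hInt x Z hx hZ hZr) (hInt x' Z' hx' hZ' hZ'r)]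
    refine (norm_integral_le_of_norm_le (g := fun ω => K * (‖x - x'‖ + ‖Z ω - Z' ω‖))
      (((integrable_const _).add hZZ').const_mul K) (Filter.Eventually.of_forall fun ω => ?_)).trans_eq ?_
    · exact (hHK _ _ (hsub _ _ hx (hZr ω)) (hsub _ _ hx' (hZ'r ω))).trans
        (mul_le_mul_of_nonneg_left (hdiff _ _ _ _) hK)
    · rw [integral_const_mul, integral_add (integrable_const _) hZZ']
      simp
  · rw [← Finset.sum_sub_distrib]
    refine (norm_sum_le_of_le (f := fun ℓ => _) Finset.univ (n := fun _ =>
      δ * B + M * (K * (‖x - x'‖ + δ'))) fun ℓ _ => ?_).trans_eq (by simp [mul_add])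
    rw [← smul_sub, ← Finset.sum_sub_distrib]
    refine norm_inv_smul_sum_le (by positivity) fun k => ?_
    have hsplit : u k ℓ • G ℓ (x - Y k) - u' k ℓ • G ℓ (x' - Y' k) =
        (u k - u' k) ℓ • G ℓ (x - Y k) + u' k ℓ • (G ℓ (x - Y k) - G ℓ (x' - Y' k)) := by
      rw [PiLp.sub_apply, sub_smul, smul_sub]; abel
    rw [hsplit]
    refine (norm_add_le _ _).trans (add_le_add ?_ ?_)
    · rw [norm_smul]
      exact mul_le_mul ((PiLp.norm_apply_le _ ℓ).trans (huu' k)) (hGB ℓ _ (hsub _ _ hx (hY k)))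
        (norm_nonneg _) hδ
    · rw [norm_smul]
      refine mul_le_mul ((PiLp.norm_apply_le _ ℓ).trans (hu' k)) ?_ (norm_nonneg _) hM
      exact (hGK ℓ _ _ (hsub _ _ hx (hY k)) (hsub _ _ hx' (hY' k))).trans
        (mul_le_mul_of_nonneg_left ((hdiff _ _ _ _).trans (add_le_add le_rfl (hYY' k))) hK)

theorem norm_mfField_le {d m : ℕ} {μ : Measure (EuclideanSpace ℝ (Fin d))}
    [IsProbabilityMeasure μ] {H : EuclideanSpace ℝ (Fin d) → EuclideanSpace ℝ (Fin d)}
    {G : Fin d → EuclideanSpace ℝ (Fin d) → EuclideanSpace ℝ (Fin d)}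
    {r B M : ℝ} (hB : 0 ≤ B) (hM : 0 ≤ M)
    (hHB : ∀ x, ‖x‖ ≤ r + r → ‖H x‖ ≤ B) (hGB : ∀ ℓ x, ‖x‖ ≤ r + r → ‖G ℓ x‖ ≤ B)
    (hμ : ∀ᵐ ξ ∂μ, ‖ξ‖ ≤ r)
    {u Y : Fin m → EuclideanSpace ℝ (Fin d)} (hu : ∀ k, ‖u k‖ ≤ M)
    (hY : ∀ k, ‖Y k‖ ≤ r) {x : EuclideanSpace ℝ (Fin d)} (hx : ‖x‖ ≤ r) :
    ‖mfField H G μ u Y x‖ ≤ B + d * (M * B) := by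
  refine (norm_add_le _ _).trans (add_le_add ?_ ?_)
  · refine (norm_integral_le_of_norm_le_const (C := B) ?_).trans_eq (by simp)
    filter_upwards [hμ] with ξ hξ
    exact hHB _ ((norm_sub_le _ _).trans (add_le_add hx hξ))
  · refine (norm_sum_le_of_le (f := fun ℓ => _) Finset.univ (n := fun _ => M * B)
      fun ℓ _ => ?_).trans_eq (by simp)
    refine norm_inv_smul_sum_le (by positivity) fun k => ?_
    rw [norm_smul]
    exact mul_le_mul ((PiLp.norm_apply_le _ ℓ).trans (hu k))
      (hGB ℓ _ ((norm_sub_le _ _).trans (add_le_add hx (hY k)))) (norm_nonneg _) hM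

theorem measurable_mfField {d m : ℕ} {μ : Measure (EuclideanSpace ℝ (Fin d))}
    [SFinite μ] {H : EuclideanSpace ℝ (Fin d) → EuclideanSpace ℝ (Fin d)}
    {G : Fin d → EuclideanSpace ℝ (Fin d) → EuclideanSpace ℝ (Fin d)}
    (hH : Continuous H) (hG : ∀ ℓ, Continuous (G ℓ)) (u Y : Fin m → EuclideanSpace ℝ (Fin d)) :
    Measurable (mfField H G μ u Y) := by
  have h1 : StronglyMeasurable fun x => ∫ ξ, H (x - ξ) ∂μ :=
    StronglyMeasurable.integral_prod_right
      (f := fun x ξ => H (x - ξ)) (hH.comp (continuous_fst.sub continuous_snd)).stronglyMeasurable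
  have h2 : Continuous fun x => ∑ ℓ : Fin d, (m : ℝ)⁻¹ • ∑ k : Fin m, (u k ℓ) • G ℓ (x - Y k) := by
    fun_prop
  exact h1.measurable.add h2.measurable

theorem finRHS_eq_mfField {d n m : ℕ} (H : EuclideanSpace ℝ (Fin d) → EuclideanSpace ℝ (Fin d))
    (G : Fin d → EuclideanSpace ℝ (Fin d) → EuclideanSpace ℝ (Fin d))
    (u Y : Fin m → EuclideanSpace ℝ (Fin d)) (X : Fin (n + 1) → EuclideanSpace ℝ (Fin d))
    (i : Fin (n + 1)) : finRHS H G u Y X i = mfField H G (empMeas X) u Y (X i) := by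
  simp only [finRHS, mfField, empMeas]
  congr 1
  rw [integral_smul_measure, integral_finsetSum_measure]
  · simp only [integral_dirac, ENNReal.toReal_inv, ENNReal.toReal_natCast]
  · intro j _
    exact integrable_dirac (by simp)

/-- Two finite families of curves, coupled by a pair of random indices, whose velocities are
Lipschitz close stay close on average. -/
theorem integral_norm_sub_le_of_coupled {Ω ι κ E : Type*} [MeasurableSpace Ω] [Fintype ι] [Fintype κ]
    [MeasurableSpace ι] [MeasurableSingletonClass ι] [MeasurableSpace κ]
    [MeasurableSingletonClass κ] [NormedAddCommGroup E] [NormedSpace ℝ E] [CompleteSpace E]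
    (P : Measure Ω) [IsProbabilityMeasure P] {ξ : Ω → ι} {ξ' : Ω → κ} (hξ : Measurable ξ)
    (hξ' : Measurable ξ') {X F : ℝ → ι → E} {X' F' : ℝ → κ → E} {T b K c : ℝ}
    (hb : 0 ≤ b) (hK : 0 ≤ K) (hc : 0 ≤ c)
    (hX : ∀ i, ContinuousOn (fun t => X t i) (Icc 0 T))
    (hX' : ∀ i, ContinuousOn (fun t => X' t i) (Icc 0 T))
    (hF : ∀ i, ∀ t ∈ Icc 0 T, IntervalIntegrable (fun s => F s i) volume 0 t)
    (hF' : ∀ i, ∀ t ∈ Icc 0 T, IntervalIntegrable (fun s => F' s i) volume 0 t)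
    (hXF : ∀ i, ∀ t ∈ Icc 0 T, X t i = X 0 i + ∫ s in (0:ℝ)..t, F s i)
    (hXF' : ∀ i, ∀ t ∈ Icc 0 T, X' t i = X' 0 i + ∫ s in (0:ℝ)..t, F' s i)
    (hFF' : ∀ s ∈ Icc 0 T, ∀ i j, ‖F s i - F' s j‖ ≤
      b * ‖X s i - X' s j‖ + K * (∫ ω, ‖X s (ξ ω) - X' s (ξ' ω)‖ ∂P) + c) :
    ∀ t ∈ Icc 0 T, ∫ ω, ‖X t (ξ ω) - X' t (ξ' ω)‖ ∂P ≤
      ((∫ ω, ‖X 0 (ξ ω) - X' 0 (ξ' ω)‖ ∂P) + c * T) * Real.exp ((b + K) * T) := by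
  intro t ht
  have hT : 0 ≤ T := ht.1.trans ht.2
  set D : ℝ → ℝ := fun s => ∫ ω, ‖X s (ξ ω) - X' s (ξ' ω)‖ ∂P with hD
  have hξξ' : Measurable fun ω => (ξ ω, ξ' ω) := hξ.prodMk hξ'
  have hsum := integral_comp_fintype P hξξ'
  have hcont : ∀ p : ι × κ, ContinuousOn (fun s => ‖X s p.1 - X' s p.2‖) (Icc 0 T) :=
    fun p => ((hX p.1).sub (hX' p.2)).norm
  have hDc : ContinuousOn D (Icc 0 T) := by
    have : D = fun s => ∑ p, (P.map fun ω => (ξ ω, ξ' ω)).real {p} * ‖X s p.1 - X' s p.2‖ := by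
      ext s
      exact hsum fun p => ‖X s p.1 - X' s p.2‖
    rw [this]
    exact continuousOn_finsetSum _ fun p _ => continuousOn_const.mul (hcont p)
  have hii : ∀ {f : ℝ → ℝ}, ContinuousOn f (Icc 0 T) → ∀ s ∈ Icc 0 T,
      IntervalIntegrable f volume 0 s := fun hf s hs =>
    (hf.mono (by rw [uIcc_of_le hs.1]; exact Icc_subset_Icc_right hs.2)).intervalIntegrable
  have hg : ∀ p : ι × κ,
      ContinuousOn (fun s => b * ‖X s p.1 - X' s p.2‖ + K * D s + c) (Icc 0 T) := fun p =>
    ((continuousOn_const.mul (hcont p)).add (continuousOn_const.mul hDc)).add continuousOn_const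
  have hintP : ∀ h : ι × κ → ℝ, Integrable (fun ω => h (ξ ω, ξ' ω)) P := fun h => by
    have hh : Measurable h := measurable_of_countable h
    obtain ⟨B, hB⟩ := (finite_range fun p => ‖h p‖).bddAbove
    exact Integrable.of_bound (hh.comp hξξ').aestronglyMeasurable B
      (Filter.Eventually.of_forall fun ω => hB ⟨_, rfl⟩)
  have hpath : ∀ s ∈ Icc 0 T, ∀ p : ι × κ, ‖X s p.1 - X' s p.2‖ ≤ ‖X 0 p.1 - X' 0 p.2‖ +
      ∫ r in (0:ℝ)..s, (b * ‖X r p.1 - X' r p.2‖ + K * D r + c) := fun s hs p => by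
    rw [hXF p.1 s hs, hXF' p.2 s hs, add_sub_add_comm,
      ← intervalIntegral.integral_sub (hF p.1 s hs) (hF' p.2 s hs)]
    refine (norm_add_le _ _).trans (add_le_add le_rfl ?_)
    refine intervalIntegral.norm_integral_le_of_norm_le hs.1
      (Filter.Eventually.of_forall fun r hr => ?_) (hii (hg p) s hs)
    exact hFF' r ⟨hr.1.le, hr.2.trans hs.2⟩ p.1 p.2
  have hDle : ∀ s ∈ Icc 0 T, D s ≤ (D 0 + c * T) + ∫ r in (0:ℝ)..s, (b + K) * D r := fun s hs => by
    obtain ⟨-, hswap⟩ := integral_intervalIntegral_swap_of_fintype P hξξ'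
      (fun p => hii (hg p) s hs)
    have h1 : D s ≤ ∫ ω, (‖X 0 (ξ ω) - X' 0 (ξ' ω)‖ +
        ∫ r in (0:ℝ)..s, (b * ‖X r (ξ ω) - X' r (ξ' ω)‖ + K * D r + c)) ∂P :=
      integral_mono (hintP fun p => ‖X s p.1 - X' s p.2‖)
        (hintP fun p => ‖X 0 p.1 - X' 0 p.2‖ +
          ∫ r in (0:ℝ)..s, (b * ‖X r p.1 - X' r p.2‖ + K * D r + c))
        fun ω => hpath s hs (ξ ω, ξ' ω)
    rw [integral_add (hintP fun p => ‖X 0 p.1 - X' 0 p.2‖)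
      (hintP fun p => ∫ r in (0:ℝ)..s, (b * ‖X r p.1 - X' r p.2‖ + K * D r + c)), hswap] at h1
    have h2 : ∀ r, ∫ ω, (b * ‖X r (ξ ω) - X' r (ξ' ω)‖ + K * D r + c) ∂P =
        (b + K) * D r + c := fun r => by
      have hi1 : Integrable (fun ω => b * ‖X r (ξ ω) - X' r (ξ' ω)‖) P :=
        hintP fun p => b * ‖X r p.1 - X' r p.2‖
      have hi2 : Integrable (fun ω => b * ‖X r (ξ ω) - X' r (ξ' ω)‖ + K * D r) P :=
        hintP fun p => b * ‖X r p.1 - X' r p.2‖ + K * D r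
      rw [integral_add hi2 (integrable_const _), integral_add hi1 (integrable_const _),
        integral_const_mul]
      simp only [integral_const, probReal_univ, one_smul, hD]
      ring
    simp only [h2] at h1
    rw [intervalIntegral.integral_add ((hii hDc s hs).const_mul _) intervalIntegrable_const] at h1
    have h3 : c * s ≤ c * T := mul_le_mul_of_nonneg_left hs.2 hc
    simp only [intervalIntegral.integral_const, sub_zero, smul_eq_mul] at h1
    linarith
  have hD0 : 0 ≤ D 0 := integral_nonneg fun _ => norm_nonneg _
  refine (le_mul_exp_of_le_add_integral (add_nonneg hb hK) hDc hDle t ht).trans ?_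
  gcongr
  exact ht.2

/-- A priori bound on the followers, independent of their number. -/
theorem norm_follower_le {d m N : ℕ} {H : EuclideanSpace ℝ (Fin d) → EuclideanSpace ℝ (Fin d)}
    {G : Fin d → EuclideanSpace ℝ (Fin d) → EuclideanSpace ℝ (Fin d)} {C M R T r : ℝ}
    (hC : 0 ≤ C) (hM : 0 ≤ M) (hR : 0 ≤ R) (hr : 0 ≤ r)
    (hH : ∀ x, ‖H x‖ ≤ C * (1 + ‖x‖)) (hG : ∀ ℓ x, ‖G ℓ x‖ ≤ C * (1 + ‖x‖))
    {u Y : ℝ → Fin m → EuclideanSpace ℝ (Fin d)} {X : ℝ → Fin N → EuclideanSpace ℝ (Fin d)}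
    (hu : ∀ s k, ‖u s k‖ ≤ M) (hY : ∀ s ∈ Icc 0 T, ∀ k, ‖Y s k‖ ≤ r)
    (hXc : ∀ i, ContinuousOn (fun t => X t i) (Icc 0 T)) (hX0 : ∀ i, ‖X 0 i‖ ≤ R)
    (hX : ∀ i, ∀ t ∈ Icc 0 T,
      X t i = X 0 i + ∫ s in (0:ℝ)..t, finRHS H G (u s) (Y s) (X s) i) :
    ∀ t ∈ Icc 0 T, ∀ i, ‖X t i‖ ≤ (R + (C + d * (M * (C * (1 + r)))) * T) *
      Real.exp ((2 * C + d * (M * C)) * T) := by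
  intro t ht i
  have hT : 0 ≤ T := ht.1.trans ht.2
  set a := C + d * (M * (C * (1 + r))) with ha
  set b := 2 * C + d * (M * C) with hb
  have ha0 : 0 ≤ a := by positivity
  have hb0 : 0 ≤ b := by positivity
  have hc : ContinuousOn (fun s => ‖X s‖) (Icc 0 T) := (continuousOn_pi.2 hXc).norm
  have hrhs : ∀ s ∈ Icc 0 T, ∀ i, ‖finRHS H G (u s) (Y s) (X s) i‖ ≤ a + b * ‖X s‖ :=
      fun s hs i => by
    have h0 := norm_nonneg (X s)
    have h1 : ‖(N : ℝ)⁻¹ • ∑ j : Fin N, H (X s i - X s j)‖ ≤ C * (1 + (‖X s‖ + ‖X s‖)) := by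
      refine norm_inv_smul_sum_le (by positivity) fun j => (hH _).trans ?_
      gcongr
      exact (norm_sub_le _ _).trans (add_le_add (norm_le_pi_norm _ _) (norm_le_pi_norm _ _))
    have h2 : ‖∑ ℓ : Fin d, (m : ℝ)⁻¹ • ∑ k : Fin m, (u s k ℓ) • G ℓ (X s i - Y s k)‖ ≤
        d * (M * (C * (1 + (‖X s‖ + r)))) := by
      refine (norm_sum_le_of_le Finset.univ (n := fun _ => M * (C * (1 + (‖X s‖ + r))))
        fun ℓ _ => ?_).trans_eq (by simp)
      refine norm_inv_smul_sum_le (by positivity) fun k => ?_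
      rw [norm_smul]
      refine mul_le_mul ((PiLp.norm_apply_le _ ℓ).trans (hu s k)) ((hG ℓ _).trans ?_)
        (norm_nonneg _) hM
      gcongr
      exact (norm_sub_le _ _).trans (add_le_add (norm_le_pi_norm _ _) (hY s hs k))
    refine (norm_add_le _ _).trans ((add_le_add h1 h2).trans_eq ?_)
    rw [ha, hb]; ring
  have hle : ∀ s ∈ Icc 0 T, ‖X s‖ ≤ (R + a * T) + ∫ τ in (0:ℝ)..s, b * ‖X τ‖ := fun s hs => by
    have hi : IntervalIntegrable (fun τ => b * ‖X τ‖) volume 0 s :=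
      ((continuousOn_const.mul hc).mono
        (by rw [uIcc_of_le hs.1]; exact Icc_subset_Icc_right hs.2)).intervalIntegrable
    have hle' : ∀ i, ‖X s i‖ ≤ (R + a * T) + ∫ τ in (0:ℝ)..s, b * ‖X τ‖ := fun i => by
      have h2 : ‖∫ τ in (0:ℝ)..s, finRHS H G (u τ) (Y τ) (X τ) i‖ ≤
          ∫ τ in (0:ℝ)..s, (a + b * ‖X τ‖) :=
        intervalIntegral.norm_integral_le_of_norm_le hs.1
          (Filter.Eventually.of_forall fun τ hτ => hrhs τ ⟨hτ.1.le, hτ.2.trans hs.2⟩ i)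
          (intervalIntegrable_const.add hi)
      rw [intervalIntegral.integral_add intervalIntegrable_const hi] at h2
      simp only [intervalIntegral.integral_const, sub_zero, smul_eq_mul] at h2
      have h3 : s * a ≤ a * T := by rw [mul_comm]; exact mul_le_mul_of_nonneg_left hs.2 ha0
      rw [hX i s hs]
      refine (norm_add_le _ _).trans ?_
      linarith [hX0 i]
    have : 0 ≤ (R + a * T) + ∫ τ in (0:ℝ)..s, b * ‖X τ‖ := by
      have := intervalIntegral.integral_nonneg (μ := volume) (f := fun τ => b * ‖X τ‖) hs.1
        fun τ _ => mul_nonneg hb0 (norm_nonneg (X τ))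
      positivity
    exact (pi_norm_le_iff_of_nonneg this).2 hle'
  refine (norm_le_pi_norm (X t) i).trans ((le_mul_exp_of_le_add_integral hb0 hc hle t ht).trans ?_)
  gcongr
  exact ht.2

theorem aestronglyMeasurable_finRHS {d m N : ℕ}
    {H : EuclideanSpace ℝ (Fin d) → EuclideanSpace ℝ (Fin d)}
    {G : Fin d → EuclideanSpace ℝ (Fin d) → EuclideanSpace ℝ (Fin d)}
    (hH : Continuous H) (hG : ∀ ℓ, Continuous (G ℓ)) {T : ℝ}
    {u Y : ℝ → Fin m → EuclideanSpace ℝ (Fin d)} {X : ℝ → Fin N → EuclideanSpace ℝ (Fin d)}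
    (hu : Measurable u) (hYc : ∀ k, ContinuousOn (fun t => Y t k) (Icc 0 T))
    (hXc : ∀ i, ContinuousOn (fun t => X t i) (Icc 0 T)) (i : Fin N) :
    AEStronglyMeasurable (fun s => finRHS H G (u s) (Y s) (X s) i)
      (volume.restrict (Icc 0 T)) := by
  have hYm : ∀ k, AEStronglyMeasurable (fun s => Y s k) (volume.restrict (Icc 0 T)) :=
    fun k => (hYc k).aestronglyMeasurable measurableSet_Icc
  have hXm : ∀ i, AEStronglyMeasurable (fun s => X s i) (volume.restrict (Icc 0 T)) :=
    fun i => (hXc i).aestronglyMeasurable measurableSet_Icc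
  have h1 : AEStronglyMeasurable (fun s => ∑ j, H (X s i - X s j)) (volume.restrict (Icc 0 T)) :=
    Finset.aestronglyMeasurable_fun_sum _ fun j _ =>
      hH.comp_aestronglyMeasurable ((hXm i).sub (hXm j))
  have h2 : ∀ ℓ k, AEStronglyMeasurable (fun s => u s k ℓ • G ℓ (X s i - Y s k))
      (volume.restrict (Icc 0 T)) := fun ℓ k => by
    have huk : Measurable fun s => u s k ℓ := by fun_prop
    exact huk.aestronglyMeasurable.smul
      ((hG ℓ).comp_aestronglyMeasurable ((hXm i).sub (hYm k)))
  have h3 : ∀ ℓ, AEStronglyMeasurable (fun s => ∑ k, u s k ℓ • G ℓ (X s i - Y s k))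
      (volume.restrict (Icc 0 T)) := fun ℓ =>
    Finset.aestronglyMeasurable_fun_sum _ fun k _ => h2 ℓ k
  have h4 : AEStronglyMeasurable
      (fun s => ∑ ℓ, (m : ℝ)⁻¹ • ∑ k, u s k ℓ • G ℓ (X s i - Y s k))
      (volume.restrict (Icc 0 T)) :=
    Finset.aestronglyMeasurable_fun_sum _ fun ℓ _ => (h3 ℓ).fun_const_smul _
  exact (h1.fun_const_smul (N : ℝ)⁻¹).add h4

theorem exists_gradient_bound {d : ℕ} {φ : EuclideanSpace ℝ (Fin d) → ℝ}
    (hφ : ContDiff ℝ (⊤ : ℕ∞) φ) (hφc : HasCompactSupport φ) :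
    Continuous (gradient φ) ∧ ∃ L ≥ 0, (∀ x, ‖gradient φ x‖ ≤ L) ∧
      ∀ x y, ‖gradient φ x - gradient φ y‖ ≤ L * ‖x - y‖ := by
  have hc : ContDiff ℝ 1 (fderiv ℝ φ) := hφ.fderiv_right (by norm_cast)
  obtain ⟨L, hL⟩ := hc.lipschitzWith_of_hasCompactSupport (hφc.fderiv ℝ) one_ne_zero
  obtain ⟨C, hC⟩ := hc.continuous.bounded_above_of_compact_support (hφc.fderiv ℝ)
  have hgr : ∀ x, gradient φ x = (InnerProductSpace.toDual ℝ _).symm (fderiv ℝ φ x) :=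
    fun _ => rfl
  have hC0 : 0 ≤ C := (norm_nonneg _).trans (hC 0)
  refine ⟨(LinearIsometryEquiv.continuous _).comp hc.continuous, max L C, le_max_of_le_right hC0,
    fun x => ?_, fun x y => ?_⟩
  · rw [hgr, LinearIsometryEquiv.norm_map]
    exact (hC x).trans (le_max_right _ _)
  · rw [hgr, hgr, ← map_sub, LinearIsometryEquiv.norm_map, ← dist_eq_norm, ← dist_eq_norm]
    exact (hL.dist_le_mul x y).trans (mul_le_mul_of_nonneg_right (le_max_left _ _) dist_nonneg)

/-- Expected form of the chain rule along a finite family of curves with a random index. -/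
theorem integral_comp_random_index_eq {Ω ι : Type*} {d : ℕ} [MeasurableSpace Ω] [Fintype ι]
    [MeasurableSpace ι] [MeasurableSingletonClass ι] (P : Measure Ω) [IsProbabilityMeasure P]
    {ξ : Ω → ι} (hξ : Measurable ξ) {X F : ℝ → ι → EuclideanSpace ℝ (Fin d)} {T V : ℝ}
    (hX : ∀ i, ContinuousOn (fun t => X t i) (Icc 0 T))
    (hF : ∀ i, ∀ t ∈ Icc 0 T, IntervalIntegrable (fun s => F s i) volume 0 t)
    (hV : ∀ i, ∀ t ∈ Icc 0 T, ‖F t i‖ ≤ V)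
    (hXF : ∀ i, ∀ t ∈ Icc 0 T, X t i = X 0 i + ∫ s in (0:ℝ)..t, F s i)
    {φ : EuclideanSpace ℝ (Fin d) → ℝ} (hφ : ContDiff ℝ (⊤ : ℕ∞) φ) (hφc : HasCompactSupport φ)
    {t : ℝ} (ht : t ∈ Icc 0 T) :
    IntervalIntegrable (fun s => ∫ ω, ⟪gradient φ (X s (ξ ω)), F s (ξ ω)⟫ ∂P) volume 0 t ∧
    ∫ ω, φ (X t (ξ ω)) ∂P = (∫ ω, φ (X 0 (ξ ω)) ∂P) +
      ∫ s in (0:ℝ)..t, ∫ ω, ⟪gradient φ (X s (ξ ω)), F s (ξ ω)⟫ ∂P := by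
  obtain ⟨hgc, L, -, hL, -⟩ := exists_gradient_bound hφ hφc
  have hInt : ∀ i, IntervalIntegrable (fun s => ⟪gradient φ (X s i), F s i⟫) volume 0 t :=
      fun i => by
    refine ((hF i t ht).norm.const_mul L).mono_fun ?_ (Filter.Eventually.of_forall fun s => ?_)
    · have h1 : AEStronglyMeasurable (fun s => X s i) (volume.restrict (uIoc 0 t)) :=
        ((hX i).aestronglyMeasurable measurableSet_Icc).mono_measure
          (Measure.restrict_mono (by
            rw [uIoc_of_le ht.1]; exact fun s hs => ⟨hs.1.le, hs.2.trans ht.2⟩) le_rfl)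
      exact (hgc.comp_aestronglyMeasurable h1).inner (hF i t ht).def'.aestronglyMeasurable
    · refine (norm_inner_le_norm _ _).trans ((mul_le_mul_of_nonneg_right (hL _)
        (norm_nonneg _)).trans (le_abs_self _))
  obtain ⟨h1, h2⟩ := integral_intervalIntegral_swap_of_fintype P hξ hInt
  refine ⟨h1, ?_⟩
  have hintP : ∀ h : ι → ℝ, Integrable (fun ω => h (ξ ω)) P := fun h => by
    have hh : Measurable h := measurable_of_countable h
    obtain ⟨B, hB⟩ := (finite_range fun i => ‖h i‖).bddAbove
    exact Integrable.of_bound (hh.comp hξ).aestronglyMeasurable B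
      (Filter.Eventually.of_forall fun ω => hB ⟨_, rfl⟩)
  rw [← h2, ← integral_add (hintP fun i => φ (X 0 i))
    (hintP fun i => ∫ s in (0:ℝ)..t, ⟪gradient φ (X s i), F s i⟫)]
  refine integral_congr_ae (Filter.Eventually.of_forall fun ω => ?_)
  have hsub : ∀ {s}, s ∈ Icc 0 t → s ∈ Icc 0 T := fun hs => ⟨hs.1, hs.2.trans ht.2⟩
  exact comp_eq_add_integral_gradient hφ hφc ht.1 (hF _ t ht) (fun s hs => hV _ s (hsub hs))
    fun s hs => hXF _ s (hsub hs)

theorem integral_norm_sub_le_add {Ω E : Type*} [MeasurableSpace Ω] {P : Measure Ω}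
    [NormedAddCommGroup E] {W₁ W₂ W₃ : Ω → E} (h₁ : Integrable W₁ P) (h₂ : Integrable W₂ P)
    (h₃ : Integrable W₃ P) :
    ∫ ω, ‖W₁ ω - W₃ ω‖ ∂P ≤ (∫ ω, ‖W₁ ω - W₂ ω‖ ∂P) + ∫ ω, ‖W₂ ω - W₃ ω‖ ∂P :=
  calc ∫ ω, ‖W₁ ω - W₃ ω‖ ∂P
      ≤ ∫ ω, (‖W₁ ω - W₂ ω‖ + ‖W₂ ω - W₃ ω‖) ∂P :=
        integral_mono (h₁.sub h₃).norm ((h₁.sub h₂).norm.add (h₂.sub h₃).norm)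
          fun _ => norm_sub_le_norm_sub_add_norm_sub _ _ _
    _ = _ := integral_add (h₁.sub h₂).norm (h₂.sub h₃).norm

/-- A family of bounded random curves that is Cauchy in mean, uniformly in time, has a limit. -/
theorem exists_limit_of_uniform_cauchy_integral {Ω E : Type*} [MeasurableSpace Ω] {P : Measure Ω}
    [IsProbabilityMeasure P] [NormedAddCommGroup E] [CompleteSpace E] [MeasurableSpace E]
    [BorelSpace E] [SecondCountableTopology E] {S : Set ℝ}
    {Z : ℕ → ℝ → Ω → E} {r : ℝ} (hr : 0 ≤ r) (hb : ∀ n, ∀ t ∈ S, ∀ ω, ‖Z n t ω‖ ≤ r)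
    (hZ : ∀ n, ∀ t ∈ S, Measurable (Z n t))
    (hC : ∀ ε > 0, ∃ n₀, ∀ n ≥ n₀, ∀ k ≥ n₀, ∀ t ∈ S, ∫ ω, ‖Z n t ω - Z k t ω‖ ∂P ≤ ε) :
    ∃ Z' : ℝ → Ω → E, (∀ t, Measurable (Z' t)) ∧ (∀ t ω, ‖Z' t ω‖ ≤ r) ∧
      ∀ ε > 0, ∃ n₀, ∀ n ≥ n₀, ∀ t ∈ S, ∫ ω, ‖Z n t ω - Z' t ω‖ ∂P ≤ ε := by
  have hInt : ∀ W : Ω → E, Measurable W → (∀ ω, ‖W ω‖ ≤ r) → Integrable W P := fun W hW hWr =>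
    Integrable.of_bound hW.aestronglyMeasurable r (Filter.Eventually.of_forall hWr)
  have hex : ∀ t, ∃ W : Ω → E, Measurable W ∧ (∀ ω, ‖W ω‖ ≤ r) ∧ (t ∈ S →
      Filter.Tendsto (fun n => ∫ ω, ‖Z n t ω - W ω‖ ∂P) Filter.atTop (nhds 0)) := fun t => by
    by_cases ht : t ∈ S
    · obtain ⟨W, h1, h2, h3⟩ := exists_limit_of_cauchy_integral hr (fun n => hb n t ht)
        (fun n => hInt _ (hZ n t ht) (hb n t ht)) fun ε hε =>
          (hC ε hε).imp fun n₀ h n hn k hk => h n hn k hk t ht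
      exact ⟨W, h1, h2, fun _ => h3⟩
    · exact ⟨fun _ => 0, measurable_const, fun _ => by simpa using hr, fun h => absurd h ht⟩
  choose Z' hm hbd hlim using hex
  refine ⟨Z', hm, hbd, fun ε hε => (hC ε hε).imp fun n₀ h n hn t ht => ?_⟩
  have hlim' : Filter.Tendsto (fun k => ε + ∫ ω, ‖Z k t ω - Z' t ω‖ ∂P) Filter.atTop
      (nhds (ε + 0)) := (hlim t ht).const_add ε
  rw [add_zero] at hlim'
  refine ge_of_tendsto hlim' ((Filter.eventually_ge_atTop n₀).mono fun k hk => ?_)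
  have hZi := fun n => hInt _ (hZ n t ht) (hb n t ht)
  have hZ'i := hInt _ (hm t) (hbd t)
  exact (integral_norm_sub_le_add (hZi n) (hZi k) hZ'i).trans (add_le_add (h n hn k hk t ht) le_rfl)

/-- Passage to the limit in the weak form of the mean-field equation. -/
theorem weak_form_of_tendsto {d m : ℕ} {Ω : Type*} [MeasurableSpace Ω] {P : Measure Ω}
    [IsProbabilityMeasure P] {H : EuclideanSpace ℝ (Fin d) → EuclideanSpace ℝ (Fin d)}
    {G : Fin d → EuclideanSpace ℝ (Fin d) → EuclideanSpace ℝ (Fin d)} (hH : Continuous H)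
    (hG : ∀ ℓ, Continuous (G ℓ)) {r K B M T : ℝ} (hK : 0 ≤ K) (hB : 0 ≤ B) (hM : 0 ≤ M)
    (hHK : ∀ x y, ‖x‖ ≤ r + r → ‖y‖ ≤ r + r → ‖H x - H y‖ ≤ K * ‖x - y‖)
    (hGK : ∀ ℓ x y, ‖x‖ ≤ r + r → ‖y‖ ≤ r + r → ‖G ℓ x - G ℓ y‖ ≤ K * ‖x - y‖)
    (hHB : ∀ x, ‖x‖ ≤ r + r → ‖H x‖ ≤ B) (hGB : ∀ ℓ x, ‖x‖ ≤ r + r → ‖G ℓ x‖ ≤ B)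
    {Z : ℕ → ℝ → Ω → EuclideanSpace ℝ (Fin d)} {Z' : ℝ → Ω → EuclideanSpace ℝ (Fin d)}
    {u Y : ℕ → ℝ → Fin m → EuclideanSpace ℝ (Fin d)} {u' Y' : ℝ → Fin m → EuclideanSpace ℝ (Fin d)}
    (hZ : ∀ n, ∀ s ∈ Icc 0 T, Measurable (Z n s)) (hZ' : ∀ s ∈ Icc 0 T, Measurable (Z' s))
    (hZr : ∀ n, ∀ s ∈ Icc 0 T, ∀ ω, ‖Z n s ω‖ ≤ r) (hZ'r : ∀ s ∈ Icc 0 T, ∀ ω, ‖Z' s ω‖ ≤ r)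
    (hu : ∀ n s k, ‖u n s k‖ ≤ M) (hu' : ∀ s k, ‖u' s k‖ ≤ M)
    (hY : ∀ n, ∀ s ∈ Icc 0 T, ∀ k, ‖Y n s k‖ ≤ r) (hY' : ∀ s ∈ Icc 0 T, ∀ k, ‖Y' s k‖ ≤ r)
    (hZlim : ∀ s ∈ Icc 0 T,
      Filter.Tendsto (fun n => ∫ ω, ‖Z n s ω - Z' s ω‖ ∂P) Filter.atTop (nhds 0))
    (hulim : ∀ s ∈ Icc 0 T, ∀ k, Filter.Tendsto (fun n => u n s k) Filter.atTop (nhds (u' s k)))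
    (hYlim : ∀ s ∈ Icc 0 T, ∀ k, Filter.Tendsto (fun n => Y n s k) Filter.atTop (nhds (Y' s k)))
    {φ : EuclideanSpace ℝ (Fin d) → ℝ} (hφ : ContDiff ℝ (⊤ : ℕ∞) φ) (hφc : HasCompactSupport φ)
    {t : ℝ} (ht : t ∈ Icc 0 T)
    (hInt : ∀ n, IntervalIntegrable (fun s => ∫ ω, ⟪gradient φ (Z n s ω),
      mfField H G (P.map (Z n s)) (u n s) (Y n s) (Z n s ω)⟫ ∂P) volume 0 t)
    (heq : ∀ n, ∫ ω, φ (Z n t ω) ∂P = (∫ ω, φ (Z n 0 ω) ∂P) + ∫ s in (0:ℝ)..t,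
      ∫ ω, ⟪gradient φ (Z n s ω),
        mfField H G (P.map (Z n s)) (u n s) (Y n s) (Z n s ω)⟫ ∂P) :
    ∫ x, φ x ∂(P.map (Z' t)) = (∫ x, φ x ∂(P.map (Z' 0))) + ∫ s in (0:ℝ)..t,
      ∫ x, ⟪gradient φ x, mfField H G (P.map (Z' s)) (u' s) (Y' s) x⟫ ∂(P.map (Z' s)) := by
  obtain ⟨hgc, L, hL0, hL, hLL⟩ := exists_gradient_bound hφ hφc
  obtain ⟨C, hC⟩ := hφ.lipschitzWith_of_hasCompactSupport hφc (by simp)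
  obtain ⟨D, hD⟩ := hφ.continuous.bounded_above_of_compact_support hφc
  have h0 : (0:ℝ) ∈ Icc 0 T := ⟨le_rfl, ht.1.trans ht.2⟩
  have hbd : ∀ {W : Ω → EuclideanSpace ℝ (Fin d)}, Measurable W → (∀ ω, ‖W ω‖ ≤ r) →
      Integrable W P := fun hW hWr =>
    Integrable.of_bound hW.aestronglyMeasurable r (Filter.Eventually.of_forall hWr)
  have hdiff : ∀ n, ∀ s ∈ Icc 0 T, Integrable (fun ω => ‖Z n s ω - Z' s ω‖) P := fun n s hs =>
    ((hbd (hZ n s hs) (hZr n s hs)).sub (hbd (hZ' s hs) (hZ'r s hs))).norm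
  have hφint : ∀ W : Ω → EuclideanSpace ℝ (Fin d), Measurable W → Integrable (fun ω => φ (W ω)) P :=
    fun W hW => Integrable.of_bound (hφ.continuous.measurable.comp hW).aestronglyMeasurable D
      (Filter.Eventually.of_forall fun _ => hD _)
  have hφlim : ∀ s ∈ Icc 0 T, Filter.Tendsto (fun n => ∫ ω, φ (Z n s ω) ∂P) Filter.atTop
      (nhds (∫ ω, φ (Z' s ω) ∂P)) := fun s hs => by
    rw [tendsto_iff_norm_sub_tendsto_zero]
    refine squeeze_zero (fun _ => norm_nonneg _) (fun n => ?_)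
      (by simpa using (hZlim s hs).const_mul (C : ℝ))
    rw [← integral_sub (hφint _ (hZ n s hs)) (hφint _ (hZ' s hs)), ← integral_const_mul]
    refine norm_integral_le_of_norm_le ((hdiff n s hs).const_mul _)
      (Filter.Eventually.of_forall fun ω => ?_)
    simpa [dist_eq_norm] using hC.dist_le_mul (Z n s ω) (Z' s ω)
  have hprob : ∀ {W : Ω → EuclideanSpace ℝ (Fin d)}, Measurable W →
      IsProbabilityMeasure (P.map W) := fun hW =>
    Measure.isProbabilityMeasure_map hW.aemeasurable
  have hfield : ∀ {W : Ω → EuclideanSpace ℝ (Fin d)}, Measurable W → (∀ ω, ‖W ω‖ ≤ r) →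
      ∀ {v y : Fin m → EuclideanSpace ℝ (Fin d)}, (∀ k, ‖v k‖ ≤ M) → (∀ k, ‖y k‖ ≤ r) → ∀ ω,
      ‖mfField H G (P.map W) v y (W ω)‖ ≤ B + d * (M * B) := fun {W} hW hWr v y hv hy ω => by
    have := hprob hW
    refine norm_mfField_le hB hM hHB hGB ?_ hv hy (hWr ω)
    rw [ae_map_iff hW.aemeasurable (measurableSet_le measurable_norm measurable_const)]
    exact Filter.Eventually.of_forall hWr
  have hV : 0 ≤ B + d * (M * B) := by positivity
  have hinner : ∀ {W : Ω → EuclideanSpace ℝ (Fin d)}, Measurable W → (∀ ω, ‖W ω‖ ≤ r) →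
      ∀ {v y : Fin m → EuclideanSpace ℝ (Fin d)}, (∀ k, ‖v k‖ ≤ M) → (∀ k, ‖y k‖ ≤ r) → ∀ ω,
      ‖⟪gradient φ (W ω), mfField H G (P.map W) v y (W ω)⟫‖ ≤ L * (B + d * (M * B)) :=
    fun hW hWr v y hv hy ω => (norm_inner_le_norm _ _).trans
      (mul_le_mul (hL _) (hfield hW hWr hv hy ω) (norm_nonneg _) hL0)
  have hmeas : ∀ {W : Ω → EuclideanSpace ℝ (Fin d)}, Measurable W →
      ∀ v y : Fin m → EuclideanSpace ℝ (Fin d),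
      AEStronglyMeasurable (fun x => ⟪gradient φ x, mfField H G (P.map W) v y x⟫) (P.map W) :=
    fun hW v y => by
    have := hprob hW
    exact (hgc.measurable.inner (measurable_mfField hH hG v y)).aestronglyMeasurable
  have hinnerint : ∀ {W : Ω → EuclideanSpace ℝ (Fin d)}, Measurable W → (∀ ω, ‖W ω‖ ≤ r) →
      ∀ {v y : Fin m → EuclideanSpace ℝ (Fin d)}, (∀ k, ‖v k‖ ≤ M) → (∀ k, ‖y k‖ ≤ r) →
      Integrable (fun ω => ⟪gradient φ (W ω), mfField H G (P.map W) v y (W ω)⟫) P :=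
    fun hW hWr v y hv hy => Integrable.of_bound
      ((hmeas hW v y).comp_measurable hW) (L * (B + d * (M * B)))
      (Filter.Eventually.of_forall (hinner hW hWr hv hy))
  have hintlim : ∀ s ∈ Icc 0 T, Filter.Tendsto (fun n => ∫ ω, ⟪gradient φ (Z n s ω),
      mfField H G (P.map (Z n s)) (u n s) (Y n s) (Z n s ω)⟫ ∂P) Filter.atTop
      (nhds (∫ ω, ⟪gradient φ (Z' s ω),
        mfField H G (P.map (Z' s)) (u' s) (Y' s) (Z' s ω)⟫ ∂P)) := fun s hs => by
    rw [tendsto_iff_norm_sub_tendsto_zero]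
    set e : ℕ → ℝ := fun n => ∫ ω, ‖Z n s ω - Z' s ω‖ ∂P with he
    set δ : ℕ → ℝ := fun n => ∑ k, ‖u n s k - u' s k‖ with hδ
    set δ' : ℕ → ℝ := fun n => ∑ k, ‖Y n s k - Y' s k‖ with hδ'
    have hδlim : Filter.Tendsto δ Filter.atTop (nhds 0) := by
      simpa using tendsto_finsetSum Finset.univ fun k _ =>
        tendsto_iff_norm_sub_tendsto_zero.1 (hulim s hs k)
    have hδ'lim : Filter.Tendsto δ' Filter.atTop (nhds 0) := by
      simpa using tendsto_finsetSum Finset.univ fun k _ =>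
        tendsto_iff_norm_sub_tendsto_zero.1 (hYlim s hs k)
    have helim : Filter.Tendsto e Filter.atTop (nhds 0) := hZlim s hs
    set c : ℝ := L * (B + d * (M * B)) + L * (K + d * (M * K)) with hcdef
    have hkey : Filter.Tendsto (fun n => c * e n +
        L * (K * e n + d * (δ n * B + M * (K * δ' n)))) Filter.atTop (nhds 0) := by
      have := (helim.const_mul c).add (((helim.const_mul K).add
        (((hδlim.mul_const B).add ((hδ'lim.const_mul K).const_mul M)).const_mul
          (d : ℝ))).const_mul L)
      simpa using this
    refine squeeze_zero (fun _ => norm_nonneg _) (fun n => ?_) hkey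
    rw [← integral_sub (hinnerint (hZ n s hs) (hZr n s hs) (hu n s) (hY n s hs))
      (hinnerint (hZ' s hs) (hZ'r s hs) (hu' s) (hY' s hs))]
    have hb : Integrable (fun ω => c * ‖Z n s ω - Z' s ω‖ +
        L * (K * e n + d * (δ n * B + M * (K * δ' n)))) P :=
      ((hdiff n s hs).const_mul c).add (integrable_const _)
    refine (norm_integral_le_of_norm_le hb (Filter.Eventually.of_forall fun ω => ?_)).trans_eq ?_
    · have h1 := norm_mfField_map_sub_le (P := P) (G := G) hH hK hB hM
        (δ := δ n) (δ' := δ' n) (Finset.sum_nonneg fun _ _ => norm_nonneg _)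
        (Finset.sum_nonneg fun _ _ => norm_nonneg _) hHK hGK hHB hGB (hZ n s hs) (hZ' s hs)
        (hZr n s hs) (hZ'r s hs) (hu' s) (hY n s hs) (hY' s hs)
        (fun k => Finset.single_le_sum (f := fun k => ‖u n s k - u' s k‖)
          (fun _ _ => norm_nonneg _) (Finset.mem_univ k))
        (fun k => Finset.single_le_sum (f := fun k => ‖Y n s k - Y' s k‖)
          (fun _ _ => norm_nonneg _) (Finset.mem_univ k))
        (hZr n s hs ω) (hZ'r s hs ω)
      set a := gradient φ (Z n s ω)
      set a' := gradient φ (Z' s ω)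
      set F := mfField H G (P.map (Z n s)) (u n s) (Y n s) (Z n s ω) with hFdef
      set F' := mfField H G (P.map (Z' s)) (u' s) (Y' s) (Z' s ω)
      have h2 : ⟪a, F⟫ - ⟪a', F'⟫ = ⟪a - a', F⟫ + ⟪a', F - F'⟫ := by
        rw [inner_sub_left, inner_sub_right]; ring
      have h3 : ‖⟪a - a', F⟫‖ ≤ (L * ‖Z n s ω - Z' s ω‖) * (B + d * (M * B)) :=
        (norm_inner_le_norm _ _).trans (mul_le_mul (hLL _ _)
          (hfield (hZ n s hs) (hZr n s hs) (hu n s) (hY n s hs) ω) (norm_nonneg _)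
          (by positivity))
      have h4 : ‖⟪a', F - F'⟫‖ ≤ L * (K * (‖Z n s ω - Z' s ω‖ + e n) +
          d * (δ n * B + M * (K * (‖Z n s ω - Z' s ω‖ + δ' n)))) :=
        (norm_inner_le_norm _ _).trans (mul_le_mul (hL _) h1 (norm_nonneg _) hL0)
      rw [h2]
      refine (norm_add_le _ _).trans ((add_le_add h3 h4).trans_eq ?_)
      rw [hcdef]; ring
    · rw [integral_add ((hdiff n s hs).const_mul c) (integrable_const _), integral_const_mul]
      simp [he]
  have hlim : Filter.Tendsto (fun n => ∫ s in (0:ℝ)..t, ∫ ω, ⟪gradient φ (Z n s ω),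
      mfField H G (P.map (Z n s)) (u n s) (Y n s) (Z n s ω)⟫ ∂P) Filter.atTop
      (nhds (∫ s in (0:ℝ)..t, ∫ ω, ⟪gradient φ (Z' s ω),
        mfField H G (P.map (Z' s)) (u' s) (Y' s) (Z' s ω)⟫ ∂P)) := by
    have hmem : ∀ s ∈ uIoc 0 t, s ∈ Icc 0 T := fun s hs => by
      rw [uIoc_of_le ht.1] at hs; exact ⟨hs.1.le, hs.2.trans ht.2⟩
    refine intervalIntegral.tendsto_integral_filter_of_dominated_convergence
      (fun _ => L * (B + d * (M * B))) (Filter.Eventually.of_forall fun n =>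
        (hInt n).def'.aestronglyMeasurable) (Filter.Eventually.of_forall fun n =>
        Filter.Eventually.of_forall fun s hs => ?_) intervalIntegrable_const
      (Filter.Eventually.of_forall fun s hs => hintlim s (hmem s hs))
    have hs' := hmem s hs
    refine (norm_integral_le_of_norm_le_const (Filter.Eventually.of_forall
      (hinner (hZ n s hs') (hZr n s hs') (hu n s) (hY n s hs')))).trans_eq (by simp)
  have hfin := tendsto_nhds_unique (hφlim t ht)
    (((hφlim 0 h0).add hlim).congr fun n => (heq n).symm)
  have hmap : ∀ s ∈ Icc 0 T, ∫ x, φ x ∂(P.map (Z' s)) = ∫ ω, φ (Z' s ω) ∂P := fun s hs =>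
    integral_map (hZ' s hs).aemeasurable hφ.continuous.aestronglyMeasurable
  rw [hmap t ht, hmap 0 h0, hfin]
  congr 1
  refine intervalIntegral.integral_congr fun s hs => ?_
  rw [uIcc_of_le ht.1] at hs
  have hs' : s ∈ Icc 0 T := ⟨hs.1, hs.2.trans ht.2⟩
  exact (integral_map (hZ' s hs').aemeasurable (hmeas (hZ' s hs') _ _)).symm

/-- Two systems of followers with random indices distributed uniformly stay close on average if
their initial data, controls and leaders are close. -/
theorem integral_norm_follower_sub_le {d m n n' : ℕ} {Ω : Type*} [MeasurableSpace Ω] (P : Measure Ω)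
    [IsProbabilityMeasure P] {H : EuclideanSpace ℝ (Fin d) → EuclideanSpace ℝ (Fin d)}
    {G : Fin d → EuclideanSpace ℝ (Fin d) → EuclideanSpace ℝ (Fin d)} (hH : Continuous H)
    {r K B M T δ δ' : ℝ} (hK : 0 ≤ K) (hB : 0 ≤ B) (hM : 0 ≤ M) (hδ : 0 ≤ δ) (hδ' : 0 ≤ δ')
    (hHK : ∀ x y, ‖x‖ ≤ r + r → ‖y‖ ≤ r + r → ‖H x - H y‖ ≤ K * ‖x - y‖)
    (hGK : ∀ ℓ x y, ‖x‖ ≤ r + r → ‖y‖ ≤ r + r → ‖G ℓ x - G ℓ y‖ ≤ K * ‖x - y‖)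
    (hHB : ∀ x, ‖x‖ ≤ r + r → ‖H x‖ ≤ B) (hGB : ∀ ℓ x, ‖x‖ ≤ r + r → ‖G ℓ x‖ ≤ B)
    {ξ : Ω → Fin (n + 1)} {ξ' : Ω → Fin (n' + 1)} (hξ : Measurable ξ) (hξ' : Measurable ξ')
    (hmap : ∀ X : Fin (n + 1) → EuclideanSpace ℝ (Fin d), P.map (fun ω => X (ξ ω)) = empMeas X)
    (hmap' : ∀ X : Fin (n' + 1) → EuclideanSpace ℝ (Fin d), P.map (fun ω => X (ξ' ω)) = empMeas X)
    {u u' Y Y' : ℝ → Fin m → EuclideanSpace ℝ (Fin d)}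
    {X : ℝ → Fin (n + 1) → EuclideanSpace ℝ (Fin d)}
    {X' : ℝ → Fin (n' + 1) → EuclideanSpace ℝ (Fin d)}
    (hu' : ∀ s k, ‖u' s k‖ ≤ M)
    (hY : ∀ s ∈ Icc 0 T, ∀ k, ‖Y s k‖ ≤ r) (hY' : ∀ s ∈ Icc 0 T, ∀ k, ‖Y' s k‖ ≤ r)
    (huu' : ∀ s ∈ Icc 0 T, ∀ k, ‖u s k - u' s k‖ ≤ δ)
    (hYY' : ∀ s ∈ Icc 0 T, ∀ k, ‖Y s k - Y' s k‖ ≤ δ')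
    (hXr : ∀ s ∈ Icc 0 T, ∀ i, ‖X s i‖ ≤ r) (hX'r : ∀ s ∈ Icc 0 T, ∀ i, ‖X' s i‖ ≤ r)
    (hX : ∀ i, ContinuousOn (fun t => X t i) (Icc 0 T))
    (hX' : ∀ i, ContinuousOn (fun t => X' t i) (Icc 0 T))
    (hF : ∀ i, ∀ t ∈ Icc 0 T,
      IntervalIntegrable (fun s => finRHS H G (u s) (Y s) (X s) i) volume 0 t)
    (hF' : ∀ i, ∀ t ∈ Icc 0 T,
      IntervalIntegrable (fun s => finRHS H G (u' s) (Y' s) (X' s) i) volume 0 t)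
    (hXF : ∀ i, ∀ t ∈ Icc 0 T,
      X t i = X 0 i + ∫ s in (0:ℝ)..t, finRHS H G (u s) (Y s) (X s) i)
    (hXF' : ∀ i, ∀ t ∈ Icc 0 T,
      X' t i = X' 0 i + ∫ s in (0:ℝ)..t, finRHS H G (u' s) (Y' s) (X' s) i) :
    ∀ t ∈ Icc 0 T, ∫ ω, ‖X t (ξ ω) - X' t (ξ' ω)‖ ∂P ≤
      ((∫ ω, ‖X 0 (ξ ω) - X' 0 (ξ' ω)‖ ∂P) + d * (δ * B + M * (K * δ')) * T) *
        Real.exp ((K + d * (M * K) + K) * T) := by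
  refine integral_norm_sub_le_of_coupled P hξ hξ' (by positivity) hK (by positivity)
    hX hX' hF hF' hXF hXF' fun s hs i j => ?_
  have hXm : Measurable (X s) := measurable_of_countable _
  have hX'm : Measurable (X' s) := measurable_of_countable _
  rw [finRHS_eq_mfField, finRHS_eq_mfField, ← hmap, ← hmap']
  refine (norm_mfField_map_sub_le hH hK hB hM hδ hδ' hHK hGK hHB hGB (hXm.comp hξ)
    (hX'm.comp hξ') (fun ω => hXr s hs _) (fun ω => hX'r s hs _) (hu' s) (hY s hs) (hY' s hs)
    (huu' s hs) (hYY' s hs) (hXr s hs i) (hX'r s hs j)).trans_eq ?_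
  simp only [Function.comp_apply]
  ring

theorem norm_integral_control_le {d m : ℕ} {u : ℝ → Fin m → EuclideanSpace ℝ (Fin d)} {M T : ℝ}
    (hM : 0 ≤ M) (hu : ∀ s ∈ Icc 0 T, ∀ k, ‖u s k‖ ≤ M) (k : Fin m) {t : ℝ} (ht : t ∈ Icc 0 T) :
    ‖∫ s in (0:ℝ)..t, u s k‖ ≤ M * T := by
  refine (intervalIntegral.norm_integral_le_of_norm_le_const (C := M) fun s hs => ?_).trans ?_
  · rw [uIoc_of_le ht.1] at hs
    exact hu s ⟨hs.1.le, hs.2.trans ht.2⟩ k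
  · rw [sub_zero, abs_of_nonneg ht.1]
    exact mul_le_mul_of_nonneg_left ht.2 hM

theorem intervalIntegrable_control {d m : ℕ} {u : ℝ → Fin m → EuclideanSpace ℝ (Fin d)} {M : ℝ}
    (hum : Measurable u) (hu : ∀ s k, ‖u s k‖ ≤ M) (k : Fin m) (a b : ℝ) :
    IntervalIntegrable (fun s => u s k) volume a b := by
  have hk : Measurable fun s => u s k := (measurable_pi_apply k).comp hum
  exact (intervalIntegrable_const (c := M)).mono_fun hk.aestronglyMeasurable
    (Filter.Eventually.of_forall fun s => (hu s k).trans (le_abs_self _))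

theorem ae_norm_le_of_msupport_subset {d : ℕ} {μ : Measure (EuclideanSpace ℝ (Fin d))} {R : ℝ}
    (h : msupport μ ⊆ closedBall 0 R) : ∀ᵐ x ∂μ, ‖x‖ ≤ R := by
  have hs : μ.support ⊆ closedBall 0 R := fun x hx => h fun U hU =>
    ((Measure.mem_support_iff_forall x).1 hx U hU).ne'
  filter_upwards [Measure.support_mem_ae (μ := μ)] with x hx
  simpa using hs hx

theorem msupport_map_subset {d : ℕ} {Ω : Type*} [MeasurableSpace Ω] {P : Measure Ω}
    {Z : Ω → EuclideanSpace ℝ (Fin d)} (hZ : Measurable Z) {r : ℝ} (hZr : ∀ ω, ‖Z ω‖ ≤ r) :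
    msupport (P.map Z) ⊆ closedBall 0 r := by
  intro x hx
  by_contra hxr
  refine hx _ (isClosed_closedBall.isOpen_compl.mem_nhds hxr) ?_
  rw [Measure.map_apply hZ isClosed_closedBall.isOpen_compl.measurableSet]
  convert measure_empty (μ := P)
  ext ω
  simpa using hZr ω

set_option maxHeartbeats 1600000 in
/-- Mean-field limit with a variable control: if the atomic initial data
`μ⁰_N → μ⁰` in `W₁` and the controls `u_N → u*` in `L^∞`, then the solutions
`(Y_N, μ_N)` of the finite-dimensional systems converge in `C⁰([0,T], χ)` to a solution
`(Y*, μ*)` of the coupled leader/mean-field system with control `u*` and initial datum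
`(Y⁰, μ⁰)`. -/
theorem mean_field_limit_existence
    {d m : ℕ} (hm : 0 < m) (T R : ℝ) (hT : 0 < T) (hR : 0 < R)
    (H : EuclideanSpace ℝ (Fin d) → EuclideanSpace ℝ (Fin d))
    (G : Fin d → EuclideanSpace ℝ (Fin d) → EuclideanSpace ℝ (Fin d))
    (hA : HypA m H G)
    (𝒰 : Set (Fin m → EuclideanSpace ℝ (Fin d)))
    (h𝒰 : IsCompact 𝒰) (h𝒰ne : 𝒰.Nonempty)
    -- initial datum (Y⁰, μ⁰) with μ⁰ supported in B(0,R)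
    (Y0 : Fin m → EuclideanSpace ℝ (Fin d))
    (μ0 : Measure (EuclideanSpace ℝ (Fin d))) (hμ0 : IsProbabilityMeasure μ0)
    (hμ0supp : msupport μ0 ⊆ closedBall (0 : EuclideanSpace ℝ (Fin d)) R)
    -- the approximating atomic initial data, supported in B(0,R), with W₁(μ⁰_N, μ⁰) → 0
    (X0 : (N : ℕ) → Fin N → EuclideanSpace ℝ (Fin d))
    (hX0 : ∀ N i, X0 N i ∈ closedBall (0 : EuclideanSpace ℝ (Fin d)) R)
    (hμ0N : Filter.Tendsto (fun N => W1 (empMeas (X0 N)) μ0) Filter.atTop (nhds 0))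
    -- the controls u_N → u* in L^∞([0,T], 𝒰)
    (uN : ℕ → ℝ → Fin m → EuclideanSpace ℝ (Fin d))
    (ustar : ℝ → Fin m → EuclideanSpace ℝ (Fin d))
    (huNmeas : ∀ N, Measurable (uN N)) (hustarmeas : Measurable ustar)
    (huN𝒰 : ∀ N t, uN N t ∈ 𝒰) (hustar𝒰 : ∀ t, ustar t ∈ 𝒰)
    (huNconv : ∀ ε > 0, ∃ N₀, ∀ N ≥ N₀, ∀ t ∈ Icc (0:ℝ) T, ∀ k,
        ‖uN N t k - ustar t k‖ ≤ ε)
    -- the solutions of the finite-dimensional problems with control u_N and initial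
    -- datum (Y⁰, X⁰_N)
    (YN : ℕ → ℝ → Fin m → EuclideanSpace ℝ (Fin d))
    (XN : (N : ℕ) → ℝ → Fin N → EuclideanSpace ℝ (Fin d))
    (hYNcont : ∀ N k, ContinuousOn (fun t => YN N t k) (Icc 0 T))
    (hXNcont : ∀ N i, ContinuousOn (fun t => XN N t i) (Icc 0 T))
    (hYN0 : ∀ N, YN N 0 = Y0) (hXN0 : ∀ N, XN N 0 = X0 N)
    (hYN : ∀ N k, ∀ t ∈ Icc (0:ℝ) T,
        YN N t k = Y0 k + ∫ s in (0:ℝ)..t, uN N s k)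
    (hXN : ∀ N i, ∀ t ∈ Icc (0:ℝ) T,
        XN N t i = X0 N i + ∫ s in (0:ℝ)..t,
          finRHS H G (uN N s) (YN N s) (XN N s) i) :
    ∃ (Ystar : ℝ → Fin m → EuclideanSpace ℝ (Fin d))
      (μstar : ℝ → Measure (EuclideanSpace ℝ (Fin d))),
      -- uniform convergence on [0,T] in the χ-metric
      (∀ ε > 0, ∃ N₀, ∀ N ≥ N₀, ∀ t ∈ Icc (0:ℝ) T,
          chiDist (YN N t) (Ystar t) (empMeas (XN N t)) (μstar t) < ε) ∧
      IsMFSol T H G ustar Ystar μstar ∧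
      Ystar 0 = Y0 ∧ μstar 0 = μ0 := by
  obtain ⟨hHl, hGl, ⟨C, hC, hHC, hGC⟩, -, -⟩ := hA
  have hHc := hHl.continuous
  have hGc := fun ℓ => (hGl ℓ).continuous
  obtain ⟨M, hM𝒰⟩ := h𝒰.isBounded.exists_norm_le
  obtain ⟨v₀, hv₀⟩ := h𝒰ne
  have hM : 0 ≤ M := (norm_nonneg _).trans (hM𝒰 v₀ hv₀)
  have huN : ∀ N s k, ‖uN N s k‖ ≤ M := fun N s k =>
    (norm_le_pi_norm _ k).trans (hM𝒰 _ (huN𝒰 N s))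
  have hus : ∀ s k, ‖ustar s k‖ ≤ M := fun s k =>
    (norm_le_pi_norm _ k).trans (hM𝒰 _ (hustar𝒰 s))
  have h0T : (0:ℝ) ∈ Icc 0 T := ⟨le_rfl, hT.le⟩
  set RY : ℝ := ‖Y0‖ + M * T with hRY
  have hRY0 : 0 ≤ RY := by positivity
  set r : ℝ := max RY ((R + (C + d * (M * (C * (1 + RY)))) * T) *
    Real.exp ((2 * C + d * (M * C)) * T)) with hr
  have hr0 : 0 ≤ r := hRY0.trans (le_max_left _ _)
  set Ystar : ℝ → Fin m → EuclideanSpace ℝ (Fin d) :=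
    fun t k => Y0 k + ∫ s in (0:ℝ)..t, ustar s k with hYstar
  have hYNRY : ∀ N, ∀ t ∈ Icc 0 T, ∀ k, ‖YN N t k‖ ≤ RY := fun N t ht k => by
    rw [hYN N k t ht]
    exact (norm_add_le _ _).trans (add_le_add (norm_le_pi_norm _ _)
      (norm_integral_control_le hM (fun s _ => huN N s) k ht))
  have hYNr : ∀ N, ∀ t ∈ Icc 0 T, ∀ k, ‖YN N t k‖ ≤ r := fun N t ht k =>
    (hYNRY N t ht k).trans (le_max_left _ _)
  have hYsr : ∀ t ∈ Icc 0 T, ∀ k, ‖Ystar t k‖ ≤ r := fun t ht k =>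
    ((norm_add_le _ _).trans (add_le_add (norm_le_pi_norm _ _)
      (norm_integral_control_le hM (fun s _ => hus s) k ht))).trans (le_max_left _ _)
  have hYdiff : ∀ N η, 0 ≤ η → (∀ t ∈ Icc (0:ℝ) T, ∀ k, ‖uN N t k - ustar t k‖ ≤ η) →
      ∀ t ∈ Icc (0:ℝ) T, ∀ k, ‖YN N t k - Ystar t k‖ ≤ η * T := fun N η hη h t ht k => by
    simp only [hYstar]
    rw [hYN N k t ht, add_sub_add_left_eq_sub, ← intervalIntegral.integral_sub
      (intervalIntegrable_control (huNmeas N) (huN N) k 0 t)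
      (intervalIntegrable_control hustarmeas hus k 0 t)]
    exact norm_integral_control_le (u := fun s k => uN N s k - ustar s k) hη h k ht
  have hXNr : ∀ N, ∀ t ∈ Icc 0 T, ∀ i, ‖XN N t i‖ ≤ r := fun N t ht i =>
    (norm_follower_le hC hM hR.le hRY0 hHC hGC (huN N) (hYNRY N) (hXNcont N)
      (fun i => by rw [hXN0]; simpa using hX0 N i)
      (fun i t ht => by rw [hXN0]; exact hXN N i t ht) t ht i).trans (le_max_right _ _)
  obtain ⟨KH, hKH0, hKH⟩ := hHl.exists_norm_sub_le_of_norm_le (r + r)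
  choose KG hKG0 hKG using fun ℓ => (hGl ℓ).exists_norm_sub_le_of_norm_le (r + r)
  have hKGsum : 0 ≤ ∑ ℓ, KG ℓ := Finset.sum_nonneg fun ℓ _ => hKG0 ℓ
  set K : ℝ := KH + ∑ ℓ, KG ℓ with hKdef
  have hK : 0 ≤ K := add_nonneg hKH0 hKGsum
  have hHK : ∀ x y, ‖x‖ ≤ r + r → ‖y‖ ≤ r + r → ‖H x - H y‖ ≤ K * ‖x - y‖ := fun x y hx hy =>
    (hKH x y hx hy).trans (mul_le_mul_of_nonneg_right (by linarith) (norm_nonneg _))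
  have hGK : ∀ ℓ x y, ‖x‖ ≤ r + r → ‖y‖ ≤ r + r → ‖G ℓ x - G ℓ y‖ ≤ K * ‖x - y‖ :=
    fun ℓ x y hx hy => (hKG ℓ x y hx hy).trans (mul_le_mul_of_nonneg_right
      ((Finset.single_le_sum (fun ℓ _ => hKG0 ℓ) (Finset.mem_univ ℓ)).trans (by linarith))
      (norm_nonneg _))
  set B : ℝ := C * (1 + (r + r)) with hBdef
  have hB : 0 ≤ B := by positivity
  have hHB : ∀ x, ‖x‖ ≤ r + r → ‖H x‖ ≤ B := fun x hx => (hHC x).trans (by rw [hBdef]; gcongr)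
  have hGB : ∀ ℓ x, ‖x‖ ≤ r + r → ‖G ℓ x‖ ≤ B := fun ℓ x hx =>
    (hGC ℓ x).trans (by rw [hBdef]; gcongr)
  -- random indices realizing almost optimal couplings of the initial data
  have hεpos : ∀ n : ℕ, (0:ℝ) < 1 / ((n:ℝ) + 1) := fun n => by positivity
  choose ξ hξ hmap hcost using fun n : ℕ => exists_random_index (X0 (n + 1)) μ0 (hεpos n)
  set P : Measure (EuclideanSpace ℝ (Fin d) × unitInterval) := μ0.prod volume with hP
  set V : ℝ := B + d * (M * B) with hVdef
  have hV : 0 ≤ V := by positivity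
  have hFV : ∀ n i, ∀ s ∈ Icc 0 T,
      ‖finRHS H G (uN (n + 1) s) (YN (n + 1) s) (XN (n + 1) s) i‖ ≤ V := fun n i s hs => by
    have hXm : Measurable fun ω => XN (n + 1) s (ξ n ω) :=
      (measurable_of_countable (XN (n + 1) s)).comp (hξ n)
    have := isProbabilityMeasure_empMeas (XN (n + 1) s)
    rw [finRHS_eq_mfField]
    refine norm_mfField_le hB hM hHB hGB ?_ (huN _ s) (hYNr _ s hs) (hXNr _ s hs i)
    rw [← hmap n, ae_map_iff hXm.aemeasurable (measurableSet_le measurable_norm measurable_const)]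
    exact Filter.Eventually.of_forall fun ω => hXNr _ s hs _
  have hFi : ∀ n i, ∀ t ∈ Icc 0 T, IntervalIntegrable
      (fun s => finRHS H G (uN (n + 1) s) (YN (n + 1) s) (XN (n + 1) s) i) volume 0 t :=
    fun n i t ht => by
    have hsub : uIoc 0 t ⊆ Icc 0 T := by
      rw [uIoc_of_le ht.1]; exact fun s hs => ⟨hs.1.le, hs.2.trans ht.2⟩
    refine (intervalIntegrable_const (c := V)).mono_fun
      ((aestronglyMeasurable_finRHS hHc hGc (huNmeas _) (hYNcont _) (hXNcont _) i).mono_measure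
        (Measure.restrict_mono hsub le_rfl)) ?_
    filter_upwards [ae_restrict_mem measurableSet_uIoc] with s hs
    exact (hFV n i s (hsub hs)).trans (le_abs_self _)
  have hXF : ∀ n i, ∀ t ∈ Icc 0 T, XN (n + 1) t i = XN (n + 1) 0 i +
      ∫ s in (0:ℝ)..t, finRHS H G (uN (n + 1) s) (YN (n + 1) s) (XN (n + 1) s) i :=
    fun n i t ht => by rw [hXN0]; exact hXN _ i t ht
  set Z : ℕ → ℝ → EuclideanSpace ℝ (Fin d) × unitInterval → EuclideanSpace ℝ (Fin d) :=
    fun n t ω => XN (n + 1) t (ξ n ω) with hZdef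
  have hZm : ∀ n t, Measurable (Z n t) := fun n t =>
    (measurable_of_countable (XN (n + 1) t)).comp (hξ n)
  have hZr : ∀ n, ∀ t ∈ Icc 0 T, ∀ ω, ‖Z n t ω‖ ≤ r := fun n t ht ω => hXNr _ t ht _
  have hInt : ∀ W : EuclideanSpace ℝ (Fin d) × unitInterval → EuclideanSpace ℝ (Fin d),
      Measurable W → (∀ ω, ‖W ω‖ ≤ r) → Integrable W P := fun W hW hWr =>
    Integrable.of_bound hW.aestronglyMeasurable r (Filter.Eventually.of_forall hWr)
  have hZi : ∀ n, ∀ t ∈ Icc 0 T, Integrable (Z n t) P := fun n t ht =>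
    hInt _ (hZm n t) (hZr n t ht)
  have hfst : Integrable (fun ω : EuclideanSpace ℝ (Fin d) × unitInterval => ω.1) P := by
    refine Integrable.of_bound measurable_fst.aestronglyMeasurable R ?_
    have hae := ae_norm_le_of_msupport_subset hμ0supp
    rw [← Measure.fst_prod (μ := μ0) (ν := (volume : Measure unitInterval))] at hae
    exact ae_of_ae_map measurable_fst.aemeasurable hae
  set c : ℕ → ℝ := fun n => ∫ ω, ‖Z n 0 ω - ω.1‖ ∂P with hcdef
  have hclim : Filter.Tendsto c Filter.atTop (nhds 0) := by
    have h1 := (hμ0N.comp (Filter.tendsto_add_atTop_nat 1)).add tendsto_one_div_add_atTop_nhds_zero_nat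
    rw [add_zero] at h1
    refine squeeze_zero (fun n => integral_nonneg fun _ => norm_nonneg _) (fun n => ?_) h1
    simp only [hcdef, hZdef, hXN0]
    exact (hcost n).le
  have hcauchy : ∀ ε > 0, ∃ n₀, ∀ n ≥ n₀, ∀ k ≥ n₀, ∀ t ∈ Icc 0 T,
      ∫ ω, ‖Z n t ω - Z k t ω‖ ∂P ≤ ε := fun ε hε => by
    set Λ : ℝ := Real.exp ((K + d * (M * K) + K) * T) with hΛ
    set Q : ℝ := (2 + d * (2 * B + M * (K * (2 * T))) * T) * Λ with hQ
    have hQ0 : 0 < Q := by positivity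
    set η : ℝ := ε / Q with hη
    have hη0 : 0 < η := div_pos hε hQ0
    obtain ⟨N₁, hN₁⟩ := huNconv η hη0
    obtain ⟨N₂, hN₂⟩ := Filter.eventually_atTop.1 (hclim.eventually_le_const hη0)
    refine ⟨max N₁ N₂, fun n hn k hk t ht => ?_⟩
    have hu1 : ∀ p ≥ max N₁ N₂, ∀ t ∈ Icc (0:ℝ) T, ∀ k, ‖uN (p + 1) t k - ustar t k‖ ≤ η :=
      fun p hp => hN₁ (p + 1) (((le_max_left _ _).trans hp).trans (Nat.le_succ p))
    have hY1 := fun p hp => hYdiff (p + 1) η hη0.le (hu1 p hp)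
    have hst := integral_norm_follower_sub_le P hHc hK hB hM (δ := η + η) (δ' := η * T + η * T)
      (by positivity) (by positivity) hHK hGK hHB hGB (hξ n) (hξ k) (hmap n) (hmap k)
      (huN (k + 1)) (hYNr (n + 1)) (hYNr (k + 1))
      (fun s hs i => by
        refine (norm_sub_le_norm_sub_add_norm_sub _ (ustar s i) _).trans
          (add_le_add (hu1 n hn s hs i) ?_)
        rw [norm_sub_rev]; exact hu1 k hk s hs i)
      (fun s hs i => by
        refine (norm_sub_le_norm_sub_add_norm_sub _ (Ystar s i) _).trans
          (add_le_add (hY1 n hn s hs i) ?_)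
        rw [norm_sub_rev]; exact hY1 k hk s hs i)
      (hXNr (n + 1)) (hXNr (k + 1)) (hXNcont _) (hXNcont _) (hFi n) (hFi k) (hXF n) (hXF k) t ht
    refine hst.trans ?_
    have h0 : ∫ ω, ‖Z n 0 ω - Z k 0 ω‖ ∂P ≤ η + η := by
      refine (integral_norm_sub_le_add (hZi n 0 h0T) hfst (hZi k 0 h0T)).trans
        (add_le_add (hN₂ n ((le_max_right _ _).trans hn)) ?_)
      simp only [norm_sub_rev _ (Z k 0 _)]
      exact hN₂ k ((le_max_right _ _).trans hk)
    calc _ ≤ ((η + η) + d * ((η + η) * B + M * (K * (η * T + η * T))) * T) * Λ := by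
          refine mul_le_mul_of_nonneg_right (add_le_add h0 le_rfl) (Real.exp_pos _).le
      _ = η * Q := by rw [hQ]; ring
      _ = ε := div_mul_cancel₀ _ hQ0.ne'
  obtain ⟨Z', hZ'm, hZ'r, hZ'lim⟩ :=
    exists_limit_of_uniform_cauchy_integral (P := P) hr0 hZr (fun n t _ => hZm n t) hcauchy
  have hZ'i : ∀ t, Integrable (Z' t) P := fun t => hInt _ (hZ'm t) (hZ'r t)
  have hZlim : ∀ s ∈ Icc 0 T,
      Filter.Tendsto (fun n => ∫ ω, ‖Z n s ω - Z' s ω‖ ∂P) Filter.atTop (nhds 0) := fun s hs => by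
    rw [Metric.tendsto_atTop]
    intro ε hε
    obtain ⟨n₀, hn₀⟩ := hZ'lim (ε / 2) (half_pos hε)
    refine ⟨n₀, fun n hn => ?_⟩
    rw [Real.dist_0_eq_abs, abs_of_nonneg (integral_nonneg fun _ => norm_nonneg _)]
    exact (hn₀ n hn s hs).trans_lt (half_lt_self hε)
  have hmapZ : ∀ n t, P.map (Z n t) = empMeas (XN (n + 1) t) := fun n t => hmap n _
  have hulim : ∀ s ∈ Icc 0 T, ∀ k,
      Filter.Tendsto (fun n => uN (n + 1) s k) Filter.atTop (nhds (ustar s k)) := fun s hs k => by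
    rw [Metric.tendsto_atTop]
    intro ε hε
    obtain ⟨n₀, hn₀⟩ := huNconv (ε / 2) (half_pos hε)
    refine ⟨n₀, fun n hn => ?_⟩
    rw [dist_eq_norm]
    exact (hn₀ (n + 1) (Nat.le_succ_of_le hn) s hs k).trans_lt (half_lt_self hε)
  have hYlim : ∀ s ∈ Icc 0 T, ∀ k,
      Filter.Tendsto (fun n => YN (n + 1) s k) Filter.atTop (nhds (Ystar s k)) := fun s hs k => by
    rw [Metric.tendsto_atTop]
    intro ε hε
    obtain ⟨n₀, hn₀⟩ := huNconv (ε / (2 * T)) (by positivity)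
    refine ⟨n₀, fun n hn => ?_⟩
    rw [dist_eq_norm]
    refine (hYdiff (n + 1) _ (by positivity) (hn₀ (n + 1) (Nat.le_succ_of_le hn)) s hs k).trans_lt ?_
    have : ε / (2 * T) * T = ε / 2 := by field_simp
    linarith
  have hprob : ∀ t, IsProbabilityMeasure (P.map (Z' t)) := fun t =>
    Measure.isProbabilityMeasure_map (hZ'm t).aemeasurable
  have hm' : (0:ℝ) < m := by exact_mod_cast hm
  have hmean : ∀ (a : ℝ) (y y' : Fin m → EuclideanSpace ℝ (Fin d)), (∀ k, ‖y k - y' k‖ ≤ a) →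
      (m : ℝ)⁻¹ * ∑ k, ‖y k - y' k‖ ≤ a := fun a y y' h => by
    rw [inv_mul_le_iff₀ hm']
    exact (Finset.sum_le_sum fun k _ => h k).trans_eq (by simp)
  have hYlip : ∀ s ∈ Icc 0 T, ∀ t ∈ Icc 0 T, ∀ k, ‖Ystar s k - Ystar t k‖ ≤ M * |s - t| :=
    fun s _ t _ k => by
    simp only [hYstar]
    rw [add_sub_add_left_eq_sub, intervalIntegral.integral_interval_sub_left
      (intervalIntegrable_control hustarmeas hus k 0 s)
      (intervalIntegrable_control hustarmeas hus k 0 t)]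
    exact intervalIntegral.norm_integral_le_of_norm_le_const fun τ _ => hus τ k
  have hZlip : ∀ n, ∀ s ∈ Icc 0 T, ∀ t ∈ Icc 0 T, ∀ ω, ‖Z n s ω - Z n t ω‖ ≤ V * |s - t| :=
    fun n s hs t ht ω => by
    simp only [hZdef]
    rw [hXF n _ s hs, hXF n _ t ht, add_sub_add_left_eq_sub,
      intervalIntegral.integral_interval_sub_left (hFi n _ s hs) (hFi n _ t ht)]
    refine intervalIntegral.norm_integral_le_of_norm_le_const fun τ hτ => hFV n _ τ ?_
    have := uIoc_subset_uIcc.trans (ordConnected_Icc.uIcc_subset ht hs) hτ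
    exact this
  have hZ'lip : ∀ s ∈ Icc 0 T, ∀ t ∈ Icc 0 T, ∫ ω, ‖Z' s ω - Z' t ω‖ ∂P ≤ V * |s - t| :=
    fun s hs t ht => by
    have hlim := ((hZlim s hs).add (hZlim t ht)).const_add (V * |s - t|)
    rw [add_zero, add_zero] at hlim
    refine ge_of_tendsto' hlim fun n => ?_
    have h1 := integral_norm_sub_le_add (hZ'i s) (hZi n s hs) (hZ'i t)
    have h2 := integral_norm_sub_le_add (hZi n s hs) (hZi n t ht) (hZ'i t)
    have h3 : ∫ ω, ‖Z n s ω - Z n t ω‖ ∂P ≤ V * |s - t| := by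
      refine (integral_mono ((hZi n s hs).sub (hZi n t ht)).norm (integrable_const _)
        (hZlip n s hs t ht)).trans_eq (by simp)
    have h4 : ∫ ω, ‖Z' s ω - Z n s ω‖ ∂P = ∫ ω, ‖Z n s ω - Z' s ω‖ ∂P := by
      simp only [norm_sub_rev]
    linarith
  have hinit : P.map (Z' 0) = μ0 := by
    have hle : ∫ ω, ‖Z' 0 ω - ω.1‖ ∂P ≤ 0 := by
      have hlim := (hZlim 0 h0T).add hclim
      rw [add_zero] at hlim
      refine ge_of_tendsto' hlim fun n => ?_
      have h1 := integral_norm_sub_le_add (hZ'i 0) (hZi n 0 h0T) hfst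
      have h4 : ∫ ω, ‖Z' 0 ω - Z n 0 ω‖ ∂P = ∫ ω, ‖Z n 0 ω - Z' 0 ω‖ ∂P := by
        simp only [norm_sub_rev]
      linarith
    have hz := (integral_eq_zero_iff_of_nonneg (fun _ => norm_nonneg _)
      ((hZ'i 0).sub hfst).norm).1 (le_antisymm hle (integral_nonneg fun _ => norm_nonneg _))
    have hae : Z' 0 =ᵐ[P] Prod.fst := by
      filter_upwards [hz] with ω hω
      exact sub_eq_zero.1 (norm_eq_zero.1 hω)
    rw [Measure.map_congr hae]
    exact Measure.fst_prod
  have hY0 : Ystar 0 = Y0 := by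
    funext k
    simp [hYstar]
  refine ⟨Ystar, fun t => P.map (Z' t), fun ε hε => ?_, ⟨fun t _ => hprob t, ⟨r + 1, by positivity,
    fun t _ => (msupport_map_subset (hZ'm t) (hZ'r t)).trans
      (closedBall_subset_closedBall (by linarith))⟩, fun t ht ε hε => ?_, fun k t _ => ?_,
    fun φ hφ hφc t ht => ?_⟩, hY0, hinit⟩
  · obtain ⟨N₁, hN₁⟩ := huNconv (ε / (4 * T)) (by positivity)
    obtain ⟨N₂, hN₂⟩ := hZ'lim (ε / 4) (by positivity)
    refine ⟨max N₁ N₂ + 1, fun N hN t ht => ?_⟩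
    obtain ⟨n, rfl⟩ : ∃ n, N = n + 1 := ⟨N - 1, by omega⟩
    have hn : max N₁ N₂ ≤ n := Nat.le_of_succ_le_succ hN
    have h1 := hmean _ _ _ (hYdiff (n + 1) _ (by positivity)
      (hN₁ (n + 1) (((le_max_left _ _).trans hn).trans (Nat.le_succ n))) t ht)
    have h2 : W1 (empMeas (XN (n + 1) t)) (P.map (Z' t)) ≤ ε / 4 := by
      rw [← hmapZ]
      exact (W1_map_le (hZm n t) (hZ'm t)).trans (hN₂ n ((le_max_right _ _).trans hn) t ht)
    have h3 : ε / (4 * T) * T = ε / 4 := by field_simp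
    rw [chiDist]
    linarith
  · refine ⟨ε / (M + V + 1), by positivity, fun s hs hst => ?_⟩
    have h1 := hmean _ _ _ (hYlip s hs t ht)
    have h2 := (W1_map_le (P := P) (hZ'm s) (hZ'm t)).trans (hZ'lip s hs t ht)
    rw [lt_div_iff₀ (by positivity)] at hst
    rw [chiDist]
    nlinarith [abs_nonneg (s - t)]
  · rw [hY0]
  · have hid := fun n => integral_comp_random_index_eq P (hξ n) (hXNcont (n + 1)) (hFi n) (hFV n)
      (hXF n) hφ hφc ht
    simp only [finRHS_eq_mfField, ← hmapZ] at hid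
    exact weak_form_of_tendsto hHc hGc hK hB hM hHK hGK hHB hGB (fun n s _ => hZm n s)
      (fun s _ => hZ'm s) hZr (fun s _ => hZ'r s) (fun n => huN (n + 1)) hus
      (fun n => hYNr (n + 1)) hYsr hZlim hulim hYlim hφ hφc ht (fun n => (hid n).1)
      fun n => (hid n).2

end
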